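/- arXiv:2010.11100 — 4 statements merged into one kernel-verified Lean document; each statement's English description precedes it below -/
import Mathlib

section
/- For every integer n ≥ 3, the maximum number of triples in a cgh on Ω_n containing neither a copy of M_1 nor a copy of S_1 equals ∇(n) + ⌊n/2⌋·⌊(n−2)/2⌋; that is, ex_circ(n, {M_1, S_1}) = ∇(n) + ⌊n/2⌋⌊(n−2)/2⌋. -/
/-- The list of points of `ZMod n` occurs in this clockwise cyclic order:
anchored at the first point, the clockwise arc-distances from it are
positive and strictly increasing. -/
def CWList (n : ℕ) : List (ZMod n) → Prop
  | [] => True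
  | a :: l => ((0 : ℕ) :: l.map fun b => (b - a).val).Chain' (· < ·)

/-- `H` is a 3-uniform (convex geometric) hypergraph on `Ω_n = ZMod n`. -/
def IsCgh (n : ℕ) (H : Finset (Finset (ZMod n))) : Prop :=
  ∀ e ∈ H, e.card = 3

def nabla (n : ℕ) : ℕ :=
  if Odd n then n * (n - 1) * (n + 1) / 24 else n * (n - 2) * (n + 2) / 24

/-- `H` contains a copy of the configuration `M₁`: two triples whose six
vertices occur in clockwise cyclic order `a₁, a₂, a₃, b₁, b₂, b₃`. -/
def HasM1 (n : ℕ) (H : Finset (Finset (ZMod n))) : Prop :=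
  ∃ a₁ a₂ a₃ b₁ b₂ b₃ : ZMod n,
    CWList n [a₁, a₂, a₃, b₁, b₂, b₃] ∧
    ({a₁, a₂, a₃} : Finset (ZMod n)) ∈ H ∧ ({b₁, b₂, b₃} : Finset (ZMod n)) ∈ H

/-- `H` contains a copy of the configuration `S₁`: two triples sharing exactly
the vertex `v`, with the five vertices in clockwise cyclic order `v, a₁, a₂, b₁, b₂`. -/
def HasS1 (n : ℕ) (H : Finset (Finset (ZMod n))) : Prop :=
  ∃ v a₁ a₂ b₁ b₂ : ZMod n,
    CWList n [v, a₁, a₂, b₁, b₂] ∧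
    ({v, a₁, a₂} : Finset (ZMod n)) ∈ H ∧ ({v, b₁, b₂} : Finset (ZMod n)) ∈ H

/-!
Call the closed arc `[s, s + y]` heavy if it contains a triple of `H`, and light otherwise. Two
triples form `M₁` or `S₁` exactly when one lies in `[s, s + y]` and the other in
`[s + y + 1, s + n]` for some `s` and `y < n`; these two arcs cover the circle and share only the
point `s`. So `H` avoids both configurations iff every such pair contains a light arc.

A light arc `[s, s + y]` yields the `y - 1` non-triples `{s, s + x, s + y}`. From each of the pairs
with `2 * y + 1 ≤ n` one can select a light arc in such a way that no non-triple is counted twice;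
since the lengths in a pair are `y` and `n - 1 - y`, this bounds the number of non-triples from
below. The bound is attained when the selected arcs are the shorter ones and the non-triples
obtained from them are the only ones.
-/

open Finset

variable {n : ℕ}

section Arithmetic

theorem two_mul_choose_two (m : ℕ) : 2 * (m + 1).choose 2 = (m + 1) * m := by
  rw [Nat.choose_two_right, Nat.mul_div_cancel' (Nat.even_mul_pred_self (m + 1)).two_dvd,
    Nat.add_sub_cancel]

theorem six_mul_choose_three (m : ℕ) : 6 * (m + 2).choose 3 = (m + 2) * (m + 1) * m := by
  have h := Nat.descFactorial_eq_factorial_mul_choose (m + 2) 3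
  simp only [Nat.descFactorial, Nat.factorial] at h
  norm_num at h
  linarith

theorem sum_range_eq_sum_add_reflect {M : Type*} [AddCommMonoid M] (f : ℕ → M) (n : ℕ) :
    ∑ y ∈ range n, f y =
      ∑ y ∈ range (n / 2), (f y + f (n - 1 - y)) + (n % 2) • f (n / 2) := by
  induction n using Nat.twoStepInduction generalizing f with
  | zero => simp
  | one => simp
  | more n ih _ =>
    have hhalf : (n + 2) / 2 = n / 2 + 1 := by omega
    have hmod : (n + 2) % 2 = n % 2 := by omega
    have hreflect : ∀ y ∈ range (n / 2), f (n + 2 - 1 - (y + 1)) = f (n - 1 - y + 1) := by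
      intro y hy
      rw [mem_range] at hy
      congr 1
      omega
    rw [sum_range_succ, sum_range_succ', ih, hhalf, hmod, sum_range_succ', sum_add_distrib,
      sum_add_distrib, sum_congr rfl hreflect]
    simp only [Nat.sub_zero, Nat.reduceSubDiff]
    abel

theorem sum_range_pred (m : ℕ) : ∑ y ∈ range (m + 1), (y - 1) = m.choose 2 := by
  rw [sum_range_succ', Nat.choose_two_right, ← sum_range_id]
  simp

theorem nabla_eq_choose_add_choose (n : ℕ) :
    nabla n = (n / 2 + 1).choose 3 + ((n + 1) / 2 + 1).choose 3 := by
  obtain ⟨k, rfl | rfl⟩ := Nat.even_or_odd' n <;> rcases k with _ | j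
  · simp [nabla, Nat.choose]
  · rw [nabla, if_neg (by simp), show 2 * (j + 1) / 2 + 1 = j + 2 by omega,
      show (2 * (j + 1) + 1) / 2 + 1 = j + 2 by omega, show 2 * (j + 1) - 2 = 2 * j by omega]
    apply Nat.div_eq_of_eq_mul_left (by norm_num)
    linarith [six_mul_choose_three j]
  · simp [nabla, Nat.choose]
  · rw [nabla, if_pos (by simp), show (2 * (j + 1) + 1) / 2 + 1 = j + 2 by omega,
      show (2 * (j + 1) + 1 + 1) / 2 + 1 = j + 1 + 2 by omega, Nat.add_sub_cancel]
    apply Nat.div_eq_of_eq_mul_left (by norm_num)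
    linarith [six_mul_choose_three j, six_mul_choose_three (j + 1)]

/-- The least number of triples missing from a cgh on `n` points that is free of `M₁` and `S₁`.
An arc of length `y` accounts for `y - 1` of them; the `n` arcs of each length `y < n / 2` count,
and, for odd `n`, so do `n / 2 + 1` of those of length `n / 2`. -/
def minNontriples (n : ℕ) : ℕ :=
  n * ∑ y ∈ range (n / 2), (y - 1) + n % 2 * ((n / 2 + 1) * (n / 2 - 1))

theorem nabla_add_add_minNontriples_eq_choose (n : ℕ) :
    nabla n + n / 2 * ((n - 2) / 2) + minNontriples n = n.choose 3 := by
  rw [nabla_eq_choose_add_choose, minNontriples]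
  obtain ⟨k, rfl | rfl⟩ := Nat.even_or_odd' n
  · rcases k with _ | _ | j
    · simp [Nat.choose]
    · simp
    · rw [show 2 * (j + 1 + 1) / 2 = j + 1 + 1 by omega,
        show (2 * (j + 1 + 1) + 1) / 2 = j + 1 + 1 by omega,
        show (2 * (j + 1 + 1) - 2) / 2 = j + 1 by omega,
        show 2 * (j + 1 + 1) % 2 = 0 by omega, sum_range_pred, zero_mul]
      have hweight : 2 * (j + 1 + 1) * (j + 1).choose 2 = (j + 1 + 1) * ((j + 1) * j) := by
        rw [mul_comm 2, mul_assoc, two_mul_choose_two]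
      have htotal : 6 * (2 * (j + 1 + 1)).choose 3 = (2 * j + 4) * (2 * j + 3) * (2 * j + 2) :=
        six_mul_choose_three (2 * j + 2)
      linarith [six_mul_choose_three (j + 1)]
  · rcases k with _ | _ | j
    · simp
    · simp [Nat.choose]
    · rw [show (2 * (j + 1 + 1) + 1) / 2 = j + 1 + 1 by omega,
        show (2 * (j + 1 + 1) + 1 + 1) / 2 = j + 1 + 1 + 1 by omega,
        show (2 * (j + 1 + 1) + 1 - 2) / 2 = j + 1 by omega,
        show (2 * (j + 1 + 1) + 1) % 2 = 1 by omega, sum_range_pred, Nat.add_sub_cancel]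
      have hweight : 2 * ((2 * (j + 1 + 1) + 1) * (j + 1).choose 2) =
          (2 * (j + 1 + 1) + 1) * ((j + 1) * j) := by
        rw [mul_left_comm, two_mul_choose_two]
      have htotal : 6 * (2 * (j + 1 + 1) + 1).choose 3 = (2 * j + 5) * (2 * j + 4) * (2 * j + 3) :=
        six_mul_choose_three (2 * j + 3)
      linarith [six_mul_choose_three (j + 1), six_mul_choose_three (j + 1 + 1)]

theorem minNontriples_le_sum {c : ℕ → ℕ} (hc : ∀ y, 2 * y + 1 ≤ n → n ≤ c y + c (n - 1 - y)) :
    minNontriples n ≤ ∑ y ∈ range n, c y * (y - 1) := by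
  rw [sum_range_eq_sum_add_reflect, minNontriples, mul_sum, smul_eq_mul]
  refine add_le_add (sum_le_sum fun y hy ↦ ?_) ?_
  · rw [mem_range] at hy
    calc n * (y - 1) ≤ (c y + c (n - 1 - y)) * (y - 1) :=
          Nat.mul_le_mul_right _ (hc y (by omega))
      _ ≤ c y * (y - 1) + c (n - 1 - y) * (n - 1 - y - 1) := by
          rw [add_mul]
          gcongr
          omega
  · rcases Nat.mod_two_eq_zero_or_one n with hn | hn
    · simp [hn]
    · have hmid := hc (n / 2) (by omega)
      rw [show n - 1 - n / 2 = n / 2 by omega] at hmid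
      gcongr
      omega

theorem sum_le_minNontriples {c : ℕ → ℕ} (hshort : ∀ y, 2 * y + 1 < n → c y ≤ n)
    (hmid : ∀ y, 2 * y + 1 = n → c y ≤ y + 1) (hlong : ∀ y, n < 2 * y + 1 → c y = 0) :
    ∑ y ∈ range n, c y * (y - 1) ≤ minNontriples n := by
  rw [sum_range_eq_sum_add_reflect, minNontriples, mul_sum, smul_eq_mul]
  refine add_le_add (sum_le_sum fun y hy ↦ ?_) ?_
  · rw [mem_range] at hy
    rw [hlong (n - 1 - y) (by omega), zero_mul, add_zero]
    exact Nat.mul_le_mul_right _ (hshort y (by omega))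
  · rcases Nat.mod_two_eq_zero_or_one n with hn | hn
    · simp [hn]
    · gcongr
      exact hmid _ (by omega)

end Arithmetic

section CyclicOrder

theorem cwList_cons_iff {a : ZMod n} {l : List (ZMod n)} :
    CWList n (a :: l) ↔ (0 :: l.map fun b ↦ (b - a).val).IsChain (· < ·) :=
  Iff.rfl

theorem natCast_add_val_sub [NeZero n] (a b : ZMod n) : a + ((b - a).val : ZMod n) = b := by
  rw [ZMod.natCast_zmod_val, add_sub_cancel]

theorem val_sub_eq_sub_of_le [NeZero n] {a b c : ZMod n} (h : (b - a).val ≤ (c - a).val) :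
    (c - b).val = (c - a).val - (b - a).val := by
  rw [← ZMod.val_sub h, sub_sub_sub_cancel_right]

theorem val_add_natCast_sub {s : ZMod n} {i j : ℕ} (hij : i ≤ j) (hj : j < i + n) :
    ((s + (j : ZMod n)) - (s + (i : ZMod n))).val = j - i := by
  rw [add_sub_add_left_eq_sub, ← Nat.cast_sub hij, ZMod.val_natCast_of_lt (by omega)]

theorem add_natCast_inj {s : ZMod n} {a b : ℕ} (ha : a < n) (hb : b < n) :
    s + (a : ZMod n) = s + (b : ZMod n) ↔ a = b := by
  rw [add_right_inj]
  exact (CharP.natCast_injOn_Iio (ZMod n) n).eq_iff ha hb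

theorem add_natCast_add_natCast_sub {s : ZMod n} {a b : ℕ} (h : a ≤ b) :
    s + (a : ZMod n) + ((b - a : ℕ) : ZMod n) = s + (b : ZMod n) := by
  rw [add_assoc, ← Nat.cast_add, Nat.add_sub_cancel' h]

theorem add_natCast_add_modulus_sub {s : ZMod n} {a : ℕ} (h : a ≤ n) :
    s + (a : ZMod n) + ((n - a : ℕ) : ZMod n) = s := by
  rw [add_natCast_add_natCast_sub h, ZMod.natCast_self, add_zero]

theorem cwList_map_add_natCast {s : ZMod n} {i : ℕ} {l : List ℕ} (hchain : (i :: l).IsChain (· < ·))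
    (hl : ∀ j ∈ l, j < i + n) : CWList n ((i :: l).map fun j : ℕ ↦ s + (j : ZMod n)) := by
  have hpair := List.isChain_iff_pairwise.1 hchain
  have hoffsets : (l.map fun j : ℕ ↦ s + (j : ZMod n)).map (fun b ↦ (b - (s + (i : ZMod n))).val) =
      l.map (· - i) := by
    rw [List.map_map]
    refine List.map_congr_left fun j hj ↦ ?_
    exact val_add_natCast_sub (List.rel_of_pairwise_cons hpair hj).le (hl j hj)
  rw [List.map_cons, cwList_cons_iff, hoffsets, ← Nat.sub_self i, ← List.map_cons (f := (· - i)),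
    List.isChain_map]
  refine hchain.imp_of_mem_imp fun a b ha _ hab ↦ ?_
  have hia : i ≤ a := by
    rcases List.mem_cons.1 ha with rfl | ha
    · exact le_rfl
    · exact (List.rel_of_pairwise_cons hpair ha).le
  exact Nat.sub_lt_sub_right hia hab

end CyclicOrder

section HeavyArcs

variable {H : Finset (Finset (ZMod n))} {s : ZMod n} {y : ℕ}

/-- The closed arc `[s, s + y]` contains a triple of `H`; an arc that is not heavy is called
light. -/
def IsHeavy (H : Finset (Finset (ZMod n))) (s : ZMod n) (y : ℕ) : Prop :=
  ∃ i j k : ℕ, i < j ∧ j < k ∧ k ≤ y ∧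
    ({s + (i : ZMod n), s + (j : ZMod n), s + (k : ZMod n)} : Finset (ZMod n)) ∈ H

theorem IsHeavy.mono {d y' : ℕ} (h : IsHeavy H (s + (d : ZMod n)) y) (hd : d + y ≤ y') :
    IsHeavy H s y' := by
  obtain ⟨i, j, k, hij, hjk, hk, hmem⟩ := h
  refine ⟨d + i, d + j, d + k, by omega, by omega, by omega, ?_⟩
  simpa only [Nat.cast_add, add_assoc] using hmem

theorem isHeavy_of_mem [NeZero n] {a b c : ZMod n} (hmem : {a, b, c} ∈ H)
    (hb : 0 < (b - a).val) (hbc : (b - a).val < (c - a).val) (hc : (c - a).val ≤ y) :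
    IsHeavy H a y :=
  ⟨0, (b - a).val, (c - a).val, hb, hbc, hc, by
    simpa only [Nat.cast_zero, add_zero, natCast_add_val_sub] using hmem⟩

theorem HasM1.exists_isHeavy [NeZero n] (h : HasM1 n H) :
    ∃ s, ∃ y < n, IsHeavy H s y ∧ IsHeavy H (s + ((y + 1 : ℕ) : ZMod n)) (n - 1 - y) := by
  obtain ⟨a₁, a₂, a₃, b₁, b₂, b₃, hcw, ha, hb⟩ := h
  simp only [cwList_cons_iff, List.map, List.isChain_cons_cons, List.isChain_singleton,
    and_true] at hcw
  obtain ⟨ha₂, ha₃, hb₁, hb₂, hb₃⟩ := hcw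
  have hlt := ZMod.val_lt (b₃ - a₁)
  have hb₁₂ := val_sub_eq_sub_of_le hb₂.le
  have hb₁₃ := val_sub_eq_sub_of_le (hb₂.trans hb₃).le
  refine ⟨a₁, (b₁ - a₁).val - 1, by omega, isHeavy_of_mem ha ha₂ ha₃ (by omega), ?_⟩
  rw [Nat.sub_add_cancel (by omega), natCast_add_val_sub]
  exact isHeavy_of_mem hb (by omega) (by omega) (by omega)

theorem HasS1.exists_isHeavy [NeZero n] (h : HasS1 n H) :
    ∃ s, ∃ y < n, IsHeavy H s y ∧ IsHeavy H (s + ((y + 1 : ℕ) : ZMod n)) (n - 1 - y) := by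
  obtain ⟨v, a₁, a₂, b₁, b₂, hcw, ha, hb⟩ := h
  simp only [cwList_cons_iff, List.map, List.isChain_cons_cons, List.isChain_singleton,
    and_true] at hcw
  obtain ⟨ha₁, ha₂, hb₁, hb₂⟩ := hcw
  have hlt := ZMod.val_lt (b₂ - v)
  have hb₁₂ := val_sub_eq_sub_of_le hb₂.le
  have hb₁v : (v - b₁).val = n - (b₁ - v).val := by
    have hne : b₁ - v ≠ 0 := fun h0 ↦ by simp [h0] at hb₁
    rw [← neg_sub, ZMod.neg_val, if_neg hne]
  refine ⟨v, (b₁ - v).val - 1, by omega, isHeavy_of_mem ha ha₁ ha₂ (by omega), ?_⟩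
  rw [Nat.sub_add_cancel (by omega), natCast_add_val_sub]
  rw [insert_comm, pair_comm] at hb
  exact isHeavy_of_mem hb (by omega) (by omega) (by omega)

theorem IsHeavy.hasM1_or_hasS1 (hy : y < n) (h : IsHeavy H s y)
    (h' : IsHeavy H (s + ((y + 1 : ℕ) : ZMod n)) (n - 1 - y)) : HasM1 n H ∨ HasS1 n H := by
  obtain ⟨i, j, k, hij, hjk, hk, hmem⟩ := h
  obtain ⟨i', j', k', hij', hjk', hk', hmem'⟩ := h'
  simp only [add_assoc s, ← Nat.cast_add] at hmem'
  by_cases hshared : y + 1 + k' < i + n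
  · refine Or.inl ⟨_, _, _, _, _, _, cwList_map_add_natCast (s := s) (i := i)
      (l := [j, k, y + 1 + i', y + 1 + j', y + 1 + k']) ?_ ?_, hmem, hmem'⟩
    · simp only [List.isChain_cons_cons, List.isChain_singleton, and_true]
      omega
    · simp only [List.mem_cons, List.not_mem_nil, or_false]
      omega
  · obtain rfl : i = 0 := by omega
    have hk'n : y + 1 + k' = n := by omega
    rw [hk'n, ZMod.natCast_self, ← Nat.cast_zero, pair_comm, insert_comm] at hmem'
    refine Or.inr ⟨_, _, _, _, _, cwList_map_add_natCast (s := s) (i := 0)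
      (l := [j, k, y + 1 + i', y + 1 + j']) ?_ ?_, hmem, hmem'⟩
    · simp only [List.isChain_cons_cons, List.isChain_singleton, and_true]
      omega
    · simp only [List.mem_cons, List.not_mem_nil, or_false]
      omega

theorem hasM1_or_hasS1_iff [NeZero n] :
    HasM1 n H ∨ HasS1 n H ↔
      ∃ s, ∃ y < n, IsHeavy H s y ∧ IsHeavy H (s + ((y + 1 : ℕ) : ZMod n)) (n - 1 - y) :=
  ⟨fun h ↦ h.elim HasM1.exists_isHeavy HasS1.exists_isHeavy,
    fun ⟨_, _, hy, h, h'⟩ ↦ h.hasM1_or_hasS1 hy h'⟩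

end HeavyArcs

section ArcTriples

/-- The triple `{s, s + x, s + y}`. For `0 < x < y < n` its vertices are in clockwise order, and
`[s, s + y]` is called a base arc of it; every triple has three base arcs. -/
def arcTriple (s : ZMod n) (x y : ℕ) : Finset (ZMod n) :=
  {s, s + (x : ZMod n), s + (y : ZMod n)}

variable {s : ZMod n} {x y : ℕ}

theorem add_natCast_mem_arcTriple (hxy : x < y) (hy : y < n) {t : ℕ} (ht : t < n) :
    s + (t : ZMod n) ∈ arcTriple s x y ↔ t = 0 ∨ t = x ∨ t = y := by
  have hzero : s + (t : ZMod n) = s ↔ t = 0 := by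
    simpa using add_natCast_inj (s := s) ht (Nat.zero_lt_of_lt hy)
  rw [arcTriple, mem_insert, mem_insert, mem_singleton, hzero, add_natCast_inj ht (hxy.trans hy),
    add_natCast_inj ht hy]

theorem card_arcTriple (hx : 0 < x) (hxy : x < y) (hy : y < n) : (arcTriple s x y).card = 3 := by
  have hne {a b : ℕ} (hab : a < b) (hb : b < n) : s + (a : ZMod n) ≠ s + (b : ZMod n) :=
    fun h ↦ hab.ne ((add_natCast_inj (hab.trans hb) hb).1 h)
  refine card_eq_three.2 ⟨_, _, _, ?_, ?_, hne hxy hy, rfl⟩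
  · simpa using hne hx (hxy.trans hy)
  · simpa using hne (hx.trans hxy) hy

theorem offsets_eq_of_arcTriple_eq {x' y' : ℕ} (hx : 0 < x) (hxy : x < y) (hy : y < n)
    (hx' : 0 < x') (hxy' : x' < y') (hy' : y' < n) (h : arcTriple s x y = arcTriple s x' y') :
    x' = x ∧ y' = y := by
  have hmem (t : ℕ) (ht : t < n) : t = 0 ∨ t = x ∨ t = y ↔ t = 0 ∨ t = x' ∨ t = y' := by
    rw [← add_natCast_mem_arcTriple (s := s) hxy hy ht, h, add_natCast_mem_arcTriple hxy' hy' ht]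
  have := hmem x (by omega)
  have := hmem y hy
  have := hmem x' (by omega)
  have := hmem y' hy'
  omega

theorem arcTriple_rotate (hxy : x ≤ y) (hy : y ≤ n) :
    arcTriple (s + (x : ZMod n)) (y - x) (n - x) = arcTriple s x y := by
  rw [arcTriple, arcTriple, add_natCast_add_natCast_sub hxy,
    add_natCast_add_modulus_sub (hxy.trans hy), pair_comm, insert_comm]

theorem arcTriple_eq_cases {s' : ZMod n} {x' y' : ℕ} (hx : 0 < x) (hxy : x < y) (hy : y < n)
    (hx' : 0 < x') (hxy' : x' < y') (hy' : y' < n) (h : arcTriple s x y = arcTriple s' x' y') :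
    (s' = s ∧ x' = x ∧ y' = y) ∨ (s' = s + (x : ZMod n) ∧ y' = n - x) ∨
      (s = s' + (x' : ZMod n) ∧ y = n - x') := by
  have hs' : s' ∈ arcTriple s x y := h ▸ mem_insert_self _ _
  rw [arcTriple, mem_insert, mem_insert, mem_singleton] at hs'
  obtain rfl | rfl | rfl := hs'
  · exact Or.inl ⟨rfl, offsets_eq_of_arcTriple_eq hx hxy hy hx' hxy' hy' h⟩
  · rw [← arcTriple_rotate hxy.le hy.le] at h
    exact Or.inr <| Or.inl ⟨rfl, (offsets_eq_of_arcTriple_eq (by omega) (by omega) (by omega)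
      hx' hxy' hy' h).2⟩
  · rw [← arcTriple_rotate hxy.le hy.le, ← arcTriple_rotate (by omega) (by omega),
      add_natCast_add_natCast_sub hxy.le] at h
    have hx'y := (offsets_eq_of_arcTriple_eq (by omega) (by omega) (by omega) hx' hxy' hy' h).1
    have hx'n : x' = n - y := by omega
    refine Or.inr <| Or.inr ⟨?_, by omega⟩
    rw [hx'n, add_natCast_add_modulus_sub hy.le]

end ArcTriples

section ArcFamilies

variable [NeZero n] {P : ZMod n → ℕ → Prop} {s : ZMod n} {x y : ℕ}

open Classical in
/-- The starting points of the arcs of length `y` in a family `P` of arcs, where `P s y` means that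
`[s, s + y]` belongs to the family. -/
noncomputable def arcStarts (P : ZMod n → ℕ → Prop) (y : ℕ) : Finset (ZMod n) :=
  {s | P s y}

/-- The triples that have a base arc in the family `P`. -/
noncomputable def triplesOver (P : ZMod n → ℕ → Prop) : Finset (Finset (ZMod n)) :=
  ((range n).sigma fun y ↦ arcStarts P y ×ˢ Ioo 0 y).image fun q ↦ arcTriple q.2.1 q.2.2 q.1

/-- No triple has two different base arcs in the family `P`. -/
def IsExclusive (P : ZMod n → ℕ → Prop) : Prop :=
  ∀ ⦃s x y⦄, 0 < x → x < y → y < n → P s y → ¬ P (s + (x : ZMod n)) (n - x)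

theorem mem_arcStarts : s ∈ arcStarts P y ↔ P s y := by
  simp [arcStarts]

theorem mem_triplesOver {e : Finset (ZMod n)} :
    e ∈ triplesOver P ↔
      ∃ s x y, 0 < x ∧ x < y ∧ y < n ∧ P s y ∧ arcTriple s x y = e := by
  simp only [triplesOver, mem_image, mem_sigma, mem_product, mem_range, mem_Ioo, mem_arcStarts]
  constructor
  · rintro ⟨⟨y, s, x⟩, ⟨hy, hP, hx, hxy⟩, rfl⟩
    exact ⟨s, x, y, hx, hxy, hy, hP, rfl⟩
  · rintro ⟨s, x, y, hx, hxy, hy, hP, rfl⟩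
    exact ⟨⟨y, s, x⟩, ⟨hy, hP, hx, hxy⟩, rfl⟩

theorem triplesOver_subset_powersetCard : triplesOver P ⊆ powersetCard 3 univ := by
  intro e he
  obtain ⟨s, x, y, hx, hxy, hy, -, rfl⟩ := mem_triplesOver.1 he
  exact mem_powersetCard_univ.2 (card_arcTriple hx hxy hy)

theorem card_sigma_arcStarts :
    ((range n).sigma fun y ↦ arcStarts P y ×ˢ Ioo 0 y).card =
      ∑ y ∈ range n, (arcStarts P y).card * (y - 1) := by
  simp [card_sigma]

theorem card_triplesOver_le :
    (triplesOver P).card ≤ ∑ y ∈ range n, (arcStarts P y).card * (y - 1) :=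
  card_image_le.trans card_sigma_arcStarts.le

theorem IsExclusive.card_triplesOver (hP : IsExclusive P) :
    (triplesOver P).card = ∑ y ∈ range n, (arcStarts P y).card * (y - 1) := by
  rw [← card_sigma_arcStarts]
  refine card_image_of_injOn ?_
  rintro ⟨y, s, x⟩ hq ⟨y', s', x'⟩ hq' h
  simp only [coe_sigma, Set.mem_sigma_iff, mem_coe, mem_product, mem_range, mem_Ioo,
    mem_arcStarts] at hq hq'
  obtain ⟨hy, hs, hx, hxy⟩ := hq
  obtain ⟨hy', hs', hx', hxy'⟩ := hq'
  rcases arcTriple_eq_cases hx hxy hy hx' hxy' hy' h with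
    ⟨rfl, rfl, rfl⟩ | ⟨rfl, rfl⟩ | ⟨rfl, rfl⟩
  · rfl
  · exact (hP hx hxy hy hs hs').elim
  · exact (hP hx' hxy' hy' hs' hs).elim

theorem le_card_arcStarts_add_card_arcStarts {t : ZMod n} {y' : ℕ}
    (h : ∀ s, P s y ∨ P (s + t) y') : n ≤ (arcStarts P y).card + (arcStarts P y').card := by
  have hmaps : Set.MapsTo (· + t) ↑(arcStarts P y)ᶜ (arcStarts P y' : Set (ZMod n)) := by
    intro s hs
    rw [mem_coe, mem_compl, mem_arcStarts] at hs
    exact mem_arcStarts.2 ((h s).resolve_left hs)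
  have hcompl := card_le_card_of_injOn _ hmaps (add_left_injective t).injOn
  have htotal := card_add_card_compl (arcStarts P y)
  rw [ZMod.card] at htotal
  omega

theorem IsExclusive.minNontriples_le_card (hP : IsExclusive P)
    (hcover : ∀ s y, 2 * y + 1 ≤ n → P s y ∨ P (s + ((y + 1 : ℕ) : ZMod n)) (n - 1 - y)) :
    minNontriples n ≤ (triplesOver P).card := by
  rw [hP.card_triplesOver]
  exact minNontriples_le_sum fun y hy ↦ le_card_arcStarts_add_card_arcStarts (hcover · y hy)

end ArcFamilies

section UpperBound

variable {H : Finset (Finset (ZMod n))}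

/-- The light arcs from which non-triples are counted: all those of length at most `(n - 1) / 2`,
and the longer ones `[s, s + y]` for which the arc `[s + y, s + n - 1]` is heavy. The second
condition makes the family exclusive. -/
def IsSelected (H : Finset (Finset (ZMod n))) (s : ZMod n) (y : ℕ) : Prop :=
  ¬ IsHeavy H s y ∧ (2 * y + 1 ≤ n ∨ IsHeavy H (s + (y : ZMod n)) (n - 1 - y))

theorem isExclusive_isSelected : IsExclusive (IsSelected H) := by
  rintro s x y hx hxy hy ⟨hlight, hsel⟩ ⟨hlight', hsel' | hheavy'⟩
  · have hheavy := hsel.resolve_left (by omega)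
    rw [← add_natCast_add_natCast_sub hxy.le] at hheavy
    exact hlight' (hheavy.mono (by omega))
  · rw [add_natCast_add_modulus_sub (by omega)] at hheavy'
    exact hlight (IsHeavy.mono (d := 0) (by simpa using hheavy') (by omega))

theorem isSelected_or_isSelected (hM : ¬ HasM1 n H) (hS : ¬ HasS1 n H) {s : ZMod n} {y : ℕ}
    (hy : 2 * y + 1 ≤ n) :
    IsSelected H s y ∨ IsSelected H (s + ((y + 1 : ℕ) : ZMod n)) (n - 1 - y) := by
  by_cases hheavy : IsHeavy H s y
  · refine Or.inr ⟨fun h ↦ (hheavy.hasM1_or_hasS1 (by omega) h).elim hM hS, Or.inr ?_⟩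
    rwa [show n - 1 - (n - 1 - y) = y by omega, show n - 1 - y = n - (y + 1) by omega,
      add_natCast_add_modulus_sub (by omega)]
  · exact Or.inl ⟨hheavy, Or.inl hy⟩

theorem disjoint_triplesOver [NeZero n] {P : ZMod n → ℕ → Prop}
    (hP : ∀ s y, P s y → ¬ IsHeavy H s y) : Disjoint H (triplesOver P) := by
  refine disjoint_right.2 fun e he heH ↦ ?_
  obtain ⟨s, x, y, hx, hxy, -, hs, rfl⟩ := mem_triplesOver.1 he
  exact hP s y hs ⟨0, x, y, hx, hxy, le_rfl, by simpa [arcTriple] using heH⟩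

theorem card_add_minNontriples_le [NeZero n] (hH : IsCgh n H) (hM : ¬ HasM1 n H)
    (hS : ¬ HasS1 n H) : H.card + minNontriples n ≤ n.choose 3 := by
  have hsub : H ∪ triplesOver (IsSelected H) ⊆ powersetCard 3 univ :=
    union_subset (fun e he ↦ mem_powersetCard_univ.2 (hH e he)) triplesOver_subset_powersetCard
  calc H.card + minNontriples n ≤ H.card + (triplesOver (IsSelected H)).card := by
        gcongr
        exact isExclusive_isSelected.minNontriples_le_card
          fun s y hy ↦ isSelected_or_isSelected hM hS hy
    _ = (H ∪ triplesOver (IsSelected H)).card :=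
        (card_union_of_disjoint (disjoint_triplesOver fun _ _ h ↦ h.1)).symm
    _ ≤ (powersetCard 3 (univ : Finset (ZMod n))).card := card_le_card hsub
    _ = n.choose 3 := by rw [card_powersetCard, card_univ, ZMod.card]

end UpperBound

section Construction

variable {s : ZMod n} {y : ℕ}

/-- The arcs whose triples are omitted from the extremal cgh: those shorter than `(n - 1) / 2` and,
for odd `n`, those of length `(n - 1) / 2` starting at one of the last `(n + 1) / 2` points. Hence
one of any two arcs `[s, s + y]` and `[s + y + 1, s + n]` is short. -/
def IsShort (s : ZMod n) (y : ℕ) : Prop :=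
  2 * y + 1 < n ∨ (2 * y + 1 = n ∧ y ≤ s.val)

theorem IsShort.mono {d y' : ℕ} (h : IsShort s y) (hd : d + y' ≤ y) :
    IsShort (s + (d : ZMod n)) y' := by
  rcases (Nat.le_of_add_left_le hd).lt_or_eq with hlt | rfl
  · unfold IsShort at *
    omega
  · obtain rfl : d = 0 := by omega
    simpa using h

theorem isShort_or_isShort (hy : y < n) :
    IsShort s y ∨ IsShort (s + ((y + 1 : ℕ) : ZMod n)) (n - 1 - y) := by
  by_cases hmid : 2 * y + 1 = n ∧ s.val < y
  · have hval : ((y + 1 : ℕ) : ZMod n).val = y + 1 := ZMod.val_natCast_of_lt (by omega)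
    have hadd := ZMod.val_add_of_lt (a := s) (b := ((y + 1 : ℕ) : ZMod n)) (by omega)
    exact Or.inr (Or.inr ⟨by omega, by omega⟩)
  · unfold IsShort
    omega

variable [NeZero n]

theorem card_triplesOver_isShort_le : (triplesOver (IsShort (n := n))).card ≤ minNontriples n := by
  refine card_triplesOver_le.trans (sum_le_minNontriples ?_ ?_ ?_)
  · exact fun y _ ↦ (card_le_univ _).trans_eq (ZMod.card n)
  · intro y hy
    have hmaps :
        Set.MapsTo ZMod.val (arcStarts (IsShort (n := n)) y : Set (ZMod n)) ↑(Ico y n) := by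
      intro s hs
      have hshort := mem_arcStarts.1 hs
      exact mem_coe.2 (mem_Ico.2 ⟨by unfold IsShort at hshort; omega, ZMod.val_lt s⟩)
    have hcard := card_le_card_of_injOn _ hmaps (ZMod.val_injective n).injOn
    rw [Nat.card_Ico] at hcard
    omega
  · intro y hy
    refine card_eq_zero.2 (eq_empty_of_forall_notMem fun s hs ↦ ?_)
    have hshort := mem_arcStarts.1 hs
    unfold IsShort at hshort
    omega

/-- The extremal cgh, consisting of all triples without a short base arc. -/
noncomputable def extremalCgh (n : ℕ) [NeZero n] : Finset (Finset (ZMod n)) :=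
  powersetCard 3 univ \ triplesOver IsShort

theorem isCgh_extremalCgh : IsCgh n (extremalCgh n) :=
  fun _ he ↦ mem_powersetCard_univ.1 (mem_sdiff.1 he).1

theorem IsShort.not_isHeavy (h : IsShort s y) : ¬ IsHeavy (extremalCgh n) s y := by
  rintro ⟨i, j, k, hij, hjk, hk, hmem⟩
  have hkn : k - i < n := by
    unfold IsShort at h
    omega
  refine (mem_sdiff.1 hmem).2 (mem_triplesOver.2
    ⟨s + (i : ZMod n), j - i, k - i, by omega, by omega, hkn, h.mono (by omega), ?_⟩)
  rw [arcTriple, add_natCast_add_natCast_sub hij.le,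
    add_natCast_add_natCast_sub (hij.trans hjk).le]

theorem not_hasM1_or_hasS1_extremalCgh : ¬ (HasM1 n (extremalCgh n) ∨ HasS1 n (extremalCgh n)) := by
  rw [hasM1_or_hasS1_iff]
  rintro ⟨s, y, hy, hheavy, hheavy'⟩
  rcases isShort_or_isShort (s := s) hy with hshort | hshort
  · exact hshort.not_isHeavy hheavy
  · exact hshort.not_isHeavy hheavy'

theorem choose_three_le_card_extremalCgh_add :
    n.choose 3 ≤ (extremalCgh n).card + minNontriples n := by
  have hcard := card_sdiff_add_card_eq_card
    (triplesOver_subset_powersetCard (P := IsShort (n := n)))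
  rw [card_powersetCard, card_univ, ZMod.card] at hcard
  rw [← hcard]
  exact Nat.add_le_add_left card_triplesOver_isShort_le _

end Construction

theorem ex_M1_S1 (n : ℕ) (hn : 3 ≤ n) :
    IsGreatest {m : ℕ | ∃ H : Finset (Finset (ZMod n)),
        IsCgh n H ∧ ¬ HasM1 n H ∧ ¬ HasS1 n H ∧ H.card = m}
      (nabla n + (n / 2) * ((n - 2) / 2)) := by
  have : NeZero n := ⟨by omega⟩
  have htotal := nabla_add_add_minNontriples_eq_choose n
  constructor
  · obtain ⟨hM, hS⟩ := not_or.1 (not_hasM1_or_hasS1_extremalCgh (n := n))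
    have hupper := card_add_minNontriples_le isCgh_extremalCgh hM hS
    have hlower := choose_three_le_card_extremalCgh_add (n := n)
    exact ⟨extremalCgh n, isCgh_extremalCgh, hM, hS, by omega⟩
  · rintro m ⟨H, hH, hM, hS, rfl⟩
    have hupper := card_add_minNontriples_le hH hM hS
    omega
end

section
/- For every integer n ≥ 3, the maximum number of triples in an S_1-free cgh on Ω_n satisfies ∇(n) + ⌊n/2⌋·⌊(n−2)/2⌋ ≤ ex_circ(n, S_1) ≤ ∇(n) + n². -/
/-!
Upper bound. Describe a triple containing `v` by the clockwise offsets `i < j` of its other two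
vertices. If `H` has no `S₁` at `v`, the intervals `[i, j]` coming from the triples of `H` at `v`
pairwise intersect, so they share a point `k`, the pivot of `v`. Let `v` see a triple if its
interval contains the pivot of `v`, or if its side opposite to `v` is a longest side. Every triple
is seen by at least one of its vertices, and the triples of `H` by all three. As a vertex sees at
most `n² / 4` triples, double counting gives `2 |H| + n.choose 3 ≤ n · n² / 4`.

Lower bound. Take the triples all of whose three sides span at most half of the circle. An `S₁`
with vertices `v, a₁, a₂, b₁, b₂` would have two short arcs, from `a₂` to `v` and from `v` to `b₁`,
that together go around more than once. For odd `n`, the arcs of length `(n + 1) / 2` that avoid the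
step from `-1` to `0` can be counted as short as well, since arcs that together go around the circle
cannot all avoid this step.
-/

open Finset

section Offsets

lemma cwList_quintuple_iff {n : ℕ} {v a₁ a₂ b₁ b₂ : ZMod n} : CWList n [v, a₁, a₂, b₁, b₂] ↔
    0 < (a₁ - v).val ∧ (a₁ - v).val < (a₂ - v).val ∧ (a₂ - v).val < (b₁ - v).val ∧
      (b₁ - v).val < (b₂ - v).val := by
  change List.IsChain _ _ ↔ _
  simp only [List.map_cons, List.map_nil, List.isChain_cons_cons, List.isChain_singleton, and_true]

/-- The triple formed by `v` and the points at clockwise distance `i` and `j` from `v`. -/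
def triangle {n : ℕ} (v : ZMod n) (i j : ℕ) : Finset (ZMod n) :=
  {v, v + (i : ZMod n), v + (j : ZMod n)}

/-- The pairs of offsets `(i, j)`, `0 < i < j < n`, for which `triangle v i j` is a triple with
`v`, `v + i`, `v + j` in clockwise order. -/
def offsetPairs (n : ℕ) : Finset (ℕ × ℕ) :=
  {p ∈ range n ×ˢ range n | 0 < p.1 ∧ p.1 < p.2}

lemma mem_offsetPairs {n i j : ℕ} : (i, j) ∈ offsetPairs n ↔ 0 < i ∧ i < j ∧ j < n := by
  simp only [offsetPairs, mem_filter, mem_product, mem_range]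
  omega

lemma triangle_rotate {n i j : ℕ} (v : ZMod n) (hij : i ≤ j) (hin : i ≤ n) :
    triangle v i j = triangle (v + (i : ZMod n)) (j - i) (n - i) := by
  have hj : v + i + ((j - i : ℕ) : ZMod n) = v + j := by
    rw [Nat.cast_sub hij]; ring
  have hn : v + i + ((n - i : ℕ) : ZMod n) = v := by
    rw [Nat.cast_sub hin, ZMod.natCast_self]; ring
  rw [triangle, triangle, hj, hn, insert_comm, pair_comm v]

variable {n : ℕ} [NeZero n]

lemma add_natCast_val_sub (v x : ZMod n) : v + ((x - v).val : ZMod n) = x := by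
  rw [ZMod.natCast_zmod_val, add_sub_cancel]

lemma exists_eq_triangle {e : Finset (ZMod n)} {v : ZMod n} (he : #e = 3) (hv : v ∈ e) :
    ∃ i j, (i, j) ∈ offsetPairs n ∧ e = triangle v i j := by
  have herase : #(e.erase v) = 2 := by rw [card_erase_of_mem hv, he]
  obtain ⟨x, y, hxy, hexy⟩ := card_eq_two.1 herase
  have he' : e = {v, x, y} := by rw [← insert_erase hv, hexy]
  have val_pos : ∀ z ∈ e.erase v, 0 < (z - v).val := fun z hz =>
    ZMod.val_pos.2 (sub_ne_zero.2 (ne_of_mem_erase hz))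
  have hx := val_pos x (by simp [hexy])
  have hy := val_pos y (by simp [hexy])
  have hne : (x - v).val ≠ (y - v).val := fun h => hxy (sub_left_injective (ZMod.val_injective n h))
  rcases hne.lt_or_gt with h | h
  · exact ⟨_, _, mem_offsetPairs.2 ⟨hx, h, ZMod.val_lt _⟩, by
      rw [triangle, add_natCast_val_sub, add_natCast_val_sub, he']⟩
  · exact ⟨_, _, mem_offsetPairs.2 ⟨hy, h, ZMod.val_lt _⟩, by
      rw [triangle, add_natCast_val_sub, add_natCast_val_sub, he', pair_comm]⟩

lemma hasS1_iff_exists_triangle {H : Finset (Finset (ZMod n))} :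
    HasS1 n H ↔ ∃ (v : ZMod n) (i j i' j' : ℕ), (i, j) ∈ offsetPairs n ∧ (i', j') ∈ offsetPairs n ∧
      j < i' ∧ triangle v i j ∈ H ∧ triangle v i' j' ∈ H := by
  simp only [HasS1, cwList_quintuple_iff, mem_offsetPairs]
  constructor
  · rintro ⟨v, a₁, a₂, b₁, b₂, hcw, hA, hB⟩
    have hb₂ := ZMod.val_lt (b₂ - v)
    refine ⟨v, (a₁ - v).val, (a₂ - v).val, (b₁ - v).val, (b₂ - v).val,
      by omega, by omega, by omega, ?_⟩
    simpa only [triangle, add_natCast_val_sub] using ⟨hA, hB⟩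
  · rintro ⟨v, i, j, i', j', hij, hij', hji', hA, hB⟩
    refine ⟨v, v + i, v + j, v + i', v + j', ?_, hA, hB⟩
    simp only [add_sub_cancel_left]
    rw [ZMod.val_cast_of_lt, ZMod.val_cast_of_lt, ZMod.val_cast_of_lt, ZMod.val_cast_of_lt] <;>
      omega

end Offsets

section SeenPairs

/-- The pairs of offsets that a vertex with pivot `k` sees: those whose interval contains `k`, and
those for which the side of length `j - i` opposite to the vertex is at least as long as the
sides of lengths `i` and `n - j`. -/
def seenPairs (n k : ℕ) : Finset (ℕ × ℕ) :=
  {p ∈ offsetPairs n | (p.1 ≤ k ∧ k ≤ p.2) ∨ (2 * p.1 ≤ p.2 ∧ n + p.1 ≤ 2 * p.2)}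

lemma mem_seenPairs {n k i j : ℕ} : (i, j) ∈ seenPairs n k ↔
    (i, j) ∈ offsetPairs n ∧ ((i ≤ k ∧ k ≤ j) ∨ (2 * i ≤ j ∧ n + i ≤ 2 * j)) :=
  mem_filter

lemma four_mul_sum_range_sub_le_sq (m d : ℕ) : 4 * ∑ t ∈ range m, (d - 2 * (t + 1)) ≤ d ^ 2 := by
  induction m generalizing d with
  | zero => simp
  | succ m ih =>
    have hshift : ∀ t, d - 2 * (t + 1 + 1) = d - 2 - 2 * (t + 1) := by omega
    have hstep : (d - 2) ^ 2 + 4 * (d - 2) ≤ d ^ 2 := by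
      rcases le_total d 2 with hd | hd
      · simp [Nat.sub_eq_zero_of_le hd]
      · obtain ⟨c, rfl⟩ := Nat.exists_eq_add_of_le hd
        rw [Nat.add_sub_cancel_left]
        nlinarith
    rw [sum_range_succ', mul_add]
    simp only [hshift]
    exact (Nat.add_le_add_right (ih (d - 2)) _).trans hstep

lemma card_seenPairs_le_of_two_mul_le {n k : ℕ} (hk : 2 * k ≤ n) :
    4 * #(seenPairs n k) ≤ n ^ 2 := by
  obtain ⟨d, rfl⟩ := Nat.exists_eq_add_of_le hk
  have hcover : seenPairs (2 * k + d) k ⊆ Icc 1 k ×ˢ Ico k (2 * k + d) ∪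
      (range (2 * k + d)).biUnion fun t =>
        {k + (t + 1)} ×ˢ Ico (2 * (k + (t + 1))) (2 * k + d) := by
    rintro ⟨i, j⟩ hp
    simp only [mem_seenPairs, mem_offsetPairs] at hp
    simp only [mem_union, mem_product, mem_Icc, mem_Ico, mem_biUnion, mem_range, mem_singleton]
    rcases le_or_gt i k with hik | hik
    · left; omega
    · exact .inr ⟨i - k - 1, by omega, by omega, by omega⟩
  have hcard : #(seenPairs (2 * k + d) k) ≤
      k * (k + d) + ∑ t ∈ range (2 * k + d), (d - 2 * (t + 1)) :=
    calc #(seenPairs (2 * k + d) k)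
        ≤ #(Icc 1 k ×ˢ Ico k (2 * k + d)) + ∑ t ∈ range (2 * k + d),
            #({k + (t + 1)} ×ˢ Ico (2 * (k + (t + 1))) (2 * k + d)) :=
          (card_le_card hcover).trans <| (card_union_le _ _).trans <|
            Nat.add_le_add_left card_biUnion_le _
      _ = k * (k + d) + ∑ t ∈ range (2 * k + d), (d - 2 * (t + 1)) := by
          simp only [card_product, Nat.card_Icc, Nat.card_Ico, card_singleton, one_mul]
          congr 2
          · omega
          · ext t; omega
  nlinarith [four_mul_sum_range_sub_le_sq (2 * k + d) d]

lemma card_seenPairs_le_card_reflect (n k : ℕ) : #(seenPairs n k) ≤ #(seenPairs n (n - k)) := by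
  refine card_le_card_of_injOn (fun p => (n - p.2, n - p.1)) ?_ ?_
  · rintro ⟨i, j⟩ hp
    simp only [mem_coe, mem_seenPairs, mem_offsetPairs] at hp ⊢
    omega
  · rintro ⟨i, j⟩ hp ⟨i', j'⟩ hp' heq
    simp only [mem_coe, mem_seenPairs, mem_offsetPairs] at hp hp'
    simp only [Prod.mk.injEq] at heq ⊢
    omega

lemma card_seenPairs_le (n k : ℕ) : 4 * #(seenPairs n k) ≤ n ^ 2 := by
  rcases le_total (2 * k) n with hk | hk
  · exact card_seenPairs_le_of_two_mul_le hk
  · exact (Nat.mul_le_mul_left 4 (card_seenPairs_le_card_reflect n k)).trans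
      (card_seenPairs_le_of_two_mul_le (by omega))

/-- The triples at `v` whose offsets are seen with pivot `k`. -/
def seenTriples {n : ℕ} (v : ZMod n) (k : ℕ) : Finset (Finset (ZMod n)) :=
  (seenPairs n k).image fun p => triangle v p.1 p.2

lemma triangle_mem_seenTriples {n : ℕ} {v : ZMod n} {k i j : ℕ} (h : (i, j) ∈ seenPairs n k) :
    triangle v i j ∈ seenTriples v k :=
  mem_image.2 ⟨_, h, rfl⟩

end SeenPairs

section UpperBound

variable {n : ℕ} [NeZero n] {H : Finset (Finset (ZMod n))}

lemma exists_pivot (hS : ¬ HasS1 n H) (v : ZMod n) :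
    ∃ k, ∀ i j, (i, j) ∈ offsetPairs n → triangle v i j ∈ H → i ≤ k ∧ k ≤ j := by
  let link := {p ∈ offsetPairs n | triangle v p.1 p.2 ∈ H}
  refine ⟨link.sup Prod.fst, fun i j hij hH => ⟨?_, Finset.sup_le fun p hp => ?_⟩⟩
  · exact le_sup (f := Prod.fst) (mem_filter.2 ⟨hij, hH⟩ : (i, j) ∈ link)
  · obtain ⟨hp, hpH⟩ := mem_filter.1 hp
    by_contra! hlt
    exact hS (hasS1_iff_exists_triangle.2 ⟨v, i, j, p.1, p.2, hij, hp, hlt, hH, hpH⟩)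

lemma exists_eq_triangle_longest_opposite {e : Finset (ZMod n)} (he : #e = 3) :
    ∃ v i j, (i, j) ∈ offsetPairs n ∧ 2 * i ≤ j ∧ n + i ≤ 2 * j ∧ e = triangle v i j := by
  obtain ⟨v, hv⟩ : e.Nonempty := card_pos.1 (by omega)
  obtain ⟨i, j, hij, rfl⟩ := exists_eq_triangle he hv
  rw [mem_offsetPairs] at hij
  simp only [mem_offsetPairs]
  have hrot := triangle_rotate v (i := i) (j := j) (by omega) (by omega)
  have hrot' := triangle_rotate (v + (i : ZMod n)) (i := j - i) (j := n - i) (by omega) (by omega)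
  by_cases hlongest : 2 * i ≤ j ∧ n + i ≤ 2 * j
  · exact ⟨v, i, j, by omega, hlongest.1, hlongest.2, rfl⟩
  by_cases hlongest' : 2 * j ≤ n + i ∧ i + j ≤ n
  · exact ⟨v + i, j - i, n - i, by omega, by omega, by omega, hrot⟩
  · exact ⟨_, _, _, by omega, by omega, by omega, hrot.trans hrot'⟩

lemma exists_mem_seenTriples (k : ZMod n → ℕ) {e : Finset (ZMod n)} (he : #e = 3) :
    ∃ v, e ∈ seenTriples v (k v) := by
  obtain ⟨v, i, j, hij, hi, hj, rfl⟩ := exists_eq_triangle_longest_opposite he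
  exact ⟨v, triangle_mem_seenTriples (mem_seenPairs.2 ⟨hij, .inr ⟨hi, hj⟩⟩)⟩

lemma two_mul_card_add_choose_three_le (hH : IsCgh n H) (k : ZMod n → ℕ)
    (hk : ∀ v i j, (i, j) ∈ offsetPairs n → triangle v i j ∈ H → i ≤ k v ∧ k v ≤ j) :
    2 * #H + n.choose 3 ≤ ∑ v, #(seenPairs n (k v)) := by
  let triples := powersetCard 3 (univ : Finset (ZMod n))
  have hHsub : H ⊆ triples := fun e he => mem_powersetCard.2 ⟨subset_univ e, hH e he⟩
  have hseen : ∀ e ∈ triples, (if e ∈ H then 2 else 0) + 1 ≤ #{v | e ∈ seenTriples v (k v)} := by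
    intro e he
    have he3 : #e = 3 := (mem_powersetCard.1 he).2
    split_ifs with heH
    · rw [show 2 + 1 = #e from he3.symm]
      refine card_le_card fun v hv => mem_filter.2 ⟨mem_univ v, ?_⟩
      obtain ⟨i, j, hij, rfl⟩ := exists_eq_triangle he3 hv
      exact triangle_mem_seenTriples (mem_seenPairs.2 ⟨hij, .inl (hk v i j hij heH)⟩)
    · obtain ⟨v, hv⟩ := exists_mem_seenTriples k he3
      exact card_pos.2 ⟨v, by simpa using hv⟩
  calc 2 * #H + n.choose 3
      = ∑ e ∈ triples, ((if e ∈ H then 2 else 0) + 1) := by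
        rw [sum_add_distrib, ← sum_filter, filter_mem_eq_inter, inter_eq_right.2 hHsub]
        simp [triples, ZMod.card, mul_comm]
    _ ≤ ∑ e ∈ triples, #{v | e ∈ seenTriples v (k v)} := sum_le_sum hseen
    _ = ∑ v, #{e ∈ triples | e ∈ seenTriples v (k v)} :=
        (sum_card_bipartiteAbove_eq_sum_card_bipartiteBelow fun v e => e ∈ seenTriples v (k v)).symm
    _ ≤ ∑ v, #(seenPairs n (k v)) := sum_le_sum fun v _ =>
        (card_le_card fun _ he => (mem_filter.1 he).2).trans card_image_le

lemma four_mul_two_mul_card_add_choose_three_le (hH : IsCgh n H) (hS : ¬ HasS1 n H) :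
    4 * (2 * #H + n.choose 3) ≤ n ^ 3 := by
  choose k hk using exists_pivot hS
  calc 4 * (2 * #H + n.choose 3)
      ≤ 4 * ∑ v, #(seenPairs n (k v)) :=
        Nat.mul_le_mul_left 4 (two_mul_card_add_choose_three_le hH k hk)
    _ = ∑ v, 4 * #(seenPairs n (k v)) := mul_sum ..
    _ ≤ ∑ _v : ZMod n, n ^ 2 := sum_le_sum fun v _ => card_seenPairs_le n (k v)
    _ = n ^ 3 := by simp only [sum_const, card_univ, ZMod.card, smul_eq_mul]; ring

end UpperBound

section Nabla

lemma three_mul_sum_range_mul (m : ℕ) :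
    3 * ∑ k ∈ range m, (k + 1) * (k + 2) = m * (m + 1) * (m + 2) := by
  induction m with
  | zero => simp
  | succ m ih => rw [sum_range_succ, mul_add, ih]; ring

lemma six_mul_sum_range_sq (m : ℕ) :
    6 * ∑ k ∈ range m, (k + 1) ^ 2 = m * (m + 1) * (2 * m + 1) := by
  induction m with
  | zero => simp
  | succ m ih => rw [sum_range_succ, mul_add, ih]; ring

lemma sum_range_mul_add_three (m : ℕ) :
    ∑ k ∈ range m, (k + 1) * (k + 3) = ∑ k ∈ range m, (k + 1) ^ 2 + m * (m + 1) := by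
  induction m with
  | zero => simp
  | succ m ih => rw [sum_range_succ, sum_range_succ, ih]; ring

lemma nabla_two_mul_add_two (m : ℕ) :
    nabla (2 * m + 2) = ∑ k ∈ range m, (k + 1) * (k + 2) := by
  have hsum := three_mul_sum_range_mul m
  have hodd : ¬ Odd (2 * m + 2) := by simp [parity_simps]
  rw [nabla, if_neg hodd, Nat.add_sub_cancel]
  exact Nat.div_eq_of_eq_mul_right (by norm_num) (by linarith)

lemma nabla_two_mul_add_one (m : ℕ) :
    nabla (2 * m + 1) = ∑ k ∈ range m, (k + 1) ^ 2 := by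
  have hsum := six_mul_sum_range_sq m
  rw [nabla, if_pos (odd_two_mul_add_one m), Nat.add_sub_cancel]
  exact Nat.div_eq_of_eq_mul_right (by norm_num) (by linarith)

lemma twentyfour_mul_nabla_of_even {n : ℕ} (hn : Even n) : 24 * nabla n + 4 * n = n ^ 3 := by
  obtain ⟨m, rfl⟩ := hn.exists_two_nsmul
  obtain _ | m := m
  · rfl
  · have hsum := three_mul_sum_range_mul m
    rw [smul_eq_mul, show 2 * (m + 1) = 2 * m + 2 by ring, nabla_two_mul_add_two]
    linarith

lemma twentyfour_mul_nabla_of_odd {n : ℕ} (hn : Odd n) : 24 * nabla n + n = n ^ 3 := by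
  obtain ⟨m, rfl⟩ := hn
  have hsum := six_mul_sum_range_sq m
  rw [nabla_two_mul_add_one]
  linarith

lemma six_mul_choose_three_add (n : ℕ) : 6 * n.choose 3 + 3 * n ^ 2 = n ^ 3 + 2 * n := by
  obtain _ | _ | n := n
  · rfl
  · rfl
  · have hfac := Nat.descFactorial_eq_factorial_mul_choose (n + 2) 3
    simp only [Nat.descFactorial, Nat.factorial, Nat.add_sub_cancel, Nat.add_succ_sub_one,
      Nat.sub_zero] at hfac
    linarith

lemma le_nabla_add_sq_div_four {n x : ℕ} (hx : 4 * (2 * x + n.choose 3) ≤ n ^ 3) :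
    x ≤ nabla n + n ^ 2 / 4 := by
  have hchoose := six_mul_choose_three_add n
  rcases n.even_or_odd with hn | hn
  · have hnabla := twentyfour_mul_nabla_of_even hn
    omega
  · have hnabla := twentyfour_mul_nabla_of_odd hn
    omega

end Nabla

section LowerBound

/-- The clockwise arc from `x` to `y` is short if its length is at most `n / 2`, or it is
`(n + 1) / 2` and the arc does not pass from `-1` to `0`. -/
def ShortArc {n : ℕ} (x y : ZMod n) : Prop :=
  (x.val < y.val ∧ y.val ≤ x.val + (n + 1) / 2) ∨ y.val + (n + 1) / 2 ≤ x.val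

instance {n : ℕ} (x y : ZMod n) : Decidable (ShortArc x y) :=
  inferInstanceAs (Decidable (_ ∨ _))

variable (n : ℕ) [NeZero n]

/-- The triples of points, listed by increasing index, whose three sides are short. -/
def balancedTriples : Finset (ZMod n × ZMod n × ZMod n) :=
  {t | (t.1.val < t.2.1.val ∧ t.2.1.val < t.2.2.val) ∧
    ShortArc t.1 t.2.1 ∧ ShortArc t.2.1 t.2.2 ∧ ShortArc t.2.2 t.1}

/-- The extremal construction: the cgh of all triples with three short sides. -/
def balancedCgh : Finset (Finset (ZMod n)) :=
  (balancedTriples n).image fun t => {t.1, t.2.1, t.2.2}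

variable {n}

lemma mem_balancedTriples {x y z : ZMod n} : (x, y, z) ∈ balancedTriples n ↔
    (x.val < y.val ∧ y.val < z.val) ∧ ShortArc x y ∧ ShortArc y z ∧ ShortArc z x := by
  simp [balancedTriples]

lemma eq_of_triple_eq_of_lt {α β : Type*} [DecidableEq α] [LinearOrder β] {f : α → β}
    {x y z x' y' z' : α}
    (hxy : f x < f y) (hyz : f y < f z) (hxy' : f x' < f y') (hyz' : f y' < f z')
    (h : ({x, y, z} : Finset α) = {x', y', z'}) : x = x' ∧ y = y' ∧ z = z' := by
  simp only [Finset.ext_iff, mem_insert, mem_singleton] at h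
  have hx := (h x).1 (.inl rfl)
  have hy := (h y).1 (.inr (.inl rfl))
  have hz := (h z).1 (.inr (.inr rfl))
  grind

lemma insert_mem_balancedCgh {x y z : ZMod n} (hxy : x.val < y.val) (hyz : y.val < z.val) :
    {x, y, z} ∈ balancedCgh n ↔ (x, y, z) ∈ balancedTriples n := by
  refine ⟨fun h => ?_, mem_image_of_mem _⟩
  obtain ⟨⟨x', y', z'⟩, ht, heq⟩ := mem_image.1 h
  have hlt := (mem_balancedTriples.1 ht).1
  obtain ⟨rfl, rfl, rfl⟩ := eq_of_triple_eq_of_lt hlt.1 hlt.2 hxy hyz heq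
  exact ht

lemma isCgh_balancedCgh : IsCgh n (balancedCgh n) := by
  intro e he
  obtain ⟨⟨x, y, z⟩, ht, rfl⟩ := mem_image.1 he
  obtain ⟨hxy, hyz⟩ := (mem_balancedTriples.1 ht).1
  exact card_eq_three.2 ⟨x, y, z, ne_of_apply_ne _ hxy.ne, ne_of_apply_ne _ (hxy.trans hyz).ne,
    ne_of_apply_ne _ hyz.ne, rfl⟩

lemma val_add_natCast_cases (v : ZMod n) {i : ℕ} (hi : i < n) :
    (v + i).val = v.val + i ∨ (v + i).val + n = v.val + i := by
  have hival := ZMod.val_cast_of_lt hi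
  rcases lt_or_ge (v.val + (i : ZMod n).val) n with h | h
  · exact .inl (by rw [ZMod.val_add_of_lt h, hival])
  · exact .inr ((ZMod.val_add_val_of_le h).symm.trans (by rw [hival]))

lemma shortArc_of_triangle_mem_balancedCgh {v : ZMod n} {i j : ℕ} (hij : (i, j) ∈ offsetPairs n)
    (h : triangle v i j ∈ balancedCgh n) :
      ShortArc v (v + (i : ZMod n)) ∧ ShortArc (v + (j : ZMod n)) v := by
  rw [mem_offsetPairs] at hij
  have hv := ZMod.val_lt v
  have hvi := ZMod.val_lt (v + (i : ZMod n))
  have hvj := ZMod.val_lt (v + (j : ZMod n))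
  rw [triangle] at h
  rcases val_add_natCast_cases v (i := i) (by omega) with hi | hi <;>
    rcases val_add_natCast_cases v hij.2.2 with hj | hj
  · rw [insert_mem_balancedCgh (by omega) (by omega), mem_balancedTriples] at h
    exact ⟨h.2.1, h.2.2.2⟩
  · rw [pair_comm, insert_comm, insert_mem_balancedCgh (by omega) (by omega),
      mem_balancedTriples] at h
    exact ⟨h.2.2.1, h.2.1⟩
  · omega
  · rw [insert_comm, pair_comm, insert_mem_balancedCgh (by omega) (by omega),
      mem_balancedTriples] at h
    exact ⟨h.2.2.2, h.2.2.1⟩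

lemma ShortArc.not_shortArc_of_offset_lt {v : ZMod n} {i j : ℕ} (hij : (i, j) ∈ offsetPairs n)
    (h : ShortArc (v + (i : ZMod n)) v) : ¬ ShortArc v (v + (j : ZMod n)) := by
  rw [mem_offsetPairs] at hij
  have hvi := ZMod.val_lt (v + (i : ZMod n))
  have hvj := ZMod.val_lt (v + (j : ZMod n))
  unfold ShortArc at h ⊢
  rcases val_add_natCast_cases v (i := i) (by omega) with hi | hi <;>
    rcases val_add_natCast_cases v hij.2.2 with hj | hj <;> omega

lemma not_hasS1_balancedCgh : ¬ HasS1 n (balancedCgh n) := by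
  rw [hasS1_iff_exists_triangle]
  rintro ⟨v, i, j, i', j', hij, hij', hji', hA, hB⟩
  have hshort := (shortArc_of_triangle_mem_balancedCgh hij hA).2
  have hshort' := (shortArc_of_triangle_mem_balancedCgh hij' hB).1
  rw [mem_offsetPairs] at hij hij'
  exact hshort.not_shortArc_of_offset_lt (mem_offsetPairs.2 (by omega)) hshort'

lemma card_balancedCgh : #(balancedCgh n) = #(balancedTriples n) := by
  refine card_image_of_injOn ?_
  rintro ⟨x, y, z⟩ ht ⟨x', y', z'⟩ ht' heq
  have hlt := (mem_balancedTriples.1 ht).1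
  have hlt' := (mem_balancedTriples.1 ht').1
  obtain ⟨rfl, rfl, rfl⟩ := eq_of_triple_eq_of_lt hlt.1 hlt.2 hlt'.1 hlt'.2 heq
  rfl

-- The summand counts the triples `x, x + t, x + j` with `j = n - 1 - k`: there are `k + 1` choices
-- for `x`, and the factor on the right is the number of choices for `t`.
lemma sum_le_card_balancedTriples :
    ∑ k ∈ range (n / 2), (k + 1) *
      (min (n - 1 - k) ((n + 1) / 2 + 1) - max 1 (n - 1 - k - (n + 1) / 2)) ≤
      #(balancedTriples n) := by
  let index := (range (n / 2)).sigma fun k => range (k + 1) ×ˢ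
    Ico (max 1 (n - 1 - k - (n + 1) / 2)) (min (n - 1 - k) ((n + 1) / 2 + 1))
  have hindex : #index = ∑ k ∈ range (n / 2), (k + 1) *
      (min (n - 1 - k) ((n + 1) / 2 + 1) - max 1 (n - 1 - k - (n + 1) / 2)) := by
    simp only [index, card_sigma, card_product, card_range, Nat.card_Ico]
  rw [← hindex]
  refine card_le_card_of_injOn (fun s => (((s.2.1 : ℕ) : ZMod n), ((s.2.1 + s.2.2 : ℕ) : ZMod n),
    ((s.2.1 + (n - 1 - s.1) : ℕ) : ZMod n))) ?_ ?_
  · rintro ⟨k, x, t⟩ hs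
    simp only [index, mem_coe, mem_sigma, mem_product, mem_range, mem_Ico] at hs
    simp only [mem_coe, mem_balancedTriples, ShortArc]
    rw [ZMod.val_cast_of_lt (a := x), ZMod.val_cast_of_lt (a := x + t), ZMod.val_cast_of_lt] <;>
      omega
  · rintro ⟨k, x, t⟩ hs ⟨k', x', t'⟩ hs' heq
    simp only [index, mem_coe, mem_sigma, mem_product, mem_range, mem_Ico] at hs hs'
    have natCast_inj {a b : ℕ} (ha : a < n) (hb : b < n) : (a : ZMod n) = b → a = b :=
      CharP.natCast_injOn_Iio (ZMod n) n ha hb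
    simp only [Prod.mk.injEq] at heq
    have hx := natCast_inj (by omega) (by omega) heq.1
    have ht := natCast_inj (by omega) (by omega) heq.2.1
    have hk := natCast_inj (by omega) (by omega) heq.2.2
    simp only [Sigma.mk.injEq, heq_eq_eq, Prod.mk.injEq]
    omega

lemma nabla_add_le_card_balancedTriples :
    nabla n + n / 2 * ((n - 2) / 2) ≤ #(balancedTriples n) := by
  refine le_trans ?_ sum_le_card_balancedTriples
  rcases Nat.even_or_odd' n with ⟨m, hm | hm⟩
  · obtain ⟨m, rfl⟩ : ∃ l, m = l + 1 := Nat.exists_eq_add_one.2 (by have := NeZero.pos n; omega)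
    rw [show n / 2 = m + 1 by omega, sum_range_succ,
      sum_congr rfl (g := fun k => (k + 1) * (k + 2)) fun k hk => by
        rw [mem_range] at hk; congr 1; omega]
    rw [show n = 2 * m + 2 by omega, nabla_two_mul_add_two]
    gcongr
    omega
  · obtain _ | m := m
    · subst hm
      decide
    rw [show n / 2 = m + 1 by omega, sum_range_succ,
      sum_congr rfl (g := fun k => (k + 1) * (k + 3)) fun k hk => by
        rw [mem_range] at hk; congr 1; omega]
    rw [show min (n - 1 - m) ((n + 1) / 2 + 1) - max 1 (n - 1 - m - (n + 1) / 2) = m + 1 by omega,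
      show (n - 2) / 2 = m by omega, hm, nabla_two_mul_add_one, sum_range_mul_add_three,
      sum_range_succ]
    linarith

end LowerBound

theorem ex_S1_bounds (n : ℕ) (hn : 3 ≤ n) :
    (∃ H : Finset (Finset (ZMod n)), IsCgh n H ∧ ¬ HasS1 n H ∧
      nabla n + (n / 2) * ((n - 2) / 2) ≤ H.card) ∧
    (∀ H : Finset (Finset (ZMod n)), IsCgh n H → ¬ HasS1 n H →
      H.card ≤ nabla n + n ^ 2) := by
  have : NeZero n := ⟨by omega⟩
  refine ⟨⟨balancedCgh n, isCgh_balancedCgh, not_hasS1_balancedCgh, ?_⟩, fun H hH hS => ?_⟩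
  · rw [card_balancedCgh]
    exact nabla_add_le_card_balancedTriples
  · calc #H ≤ nabla n + n ^ 2 / 4 :=
          le_nabla_add_sq_div_four (four_mul_two_mul_card_add_choose_three_le hH hS)
      _ ≤ nabla n + n ^ 2 := Nat.add_le_add_left (Nat.div_le_self _ _) _
end

section
/- For every integer n ≥ 3, the maximum number of triples in an M_3-free cgh on Ω_n equals C(n,3) − C(n−3,3); that is, ex_circ(n, M_3) = C(n,3) − C(n−3,3), where C(m,3) denotes the binomial coefficient m choose 3 (equal to 0 when m < 3). -/
/-- `H` contains a copy of the configuration `M₃`: two vertex-disjoint triples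
whose six vertices occur in clockwise cyclic order `a₁, b₁, a₂, b₂, a₃, b₃`. -/
def HasM3 (n : ℕ) (H : Finset (Finset (ZMod n))) : Prop :=
  ∃ a₁ a₂ a₃ b₁ b₂ b₃ : ZMod n,
    CWList n [a₁, b₁, a₂, b₂, a₃, b₃] ∧
    ({a₁, a₂, a₃} : Finset (ZMod n)) ∈ H ∧ ({b₁, b₂, b₃} : Finset (ZMod n)) ∈ H

/-!
Cut the circle open at a point, so that the vertices become natural numbers. The upper bound then
concerns families of `r`-subsets of `{0, …, k + r - 1}` in which no two sets alternate. Induct on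
`k`: compress the family by replacing the largest vertex `b` with its neighbour `a` wherever
possible, which preserves the cardinality. A compressed set `e ∪ {b}` with `a ∉ e` is in the
original family together with `e ∪ {a}`, so if two such `e`, `f` alternated, then so would
`e ∪ {a}` and `f ∪ {b}`. Hence these sets `e`, as well as the compressed sets avoiding `b`, satisfy
the induction hypothesis. The remaining sets contain both `a` and `b`, and Pascal's rule adds up the
bounds.

For the lower bound take all `r`-sets that contain `0` or two neighbouring vertices: in a crossing
pair no point of one set fits between neighbours in the other, and `0` lies in at most one of them.
-/

open Finset
open scoped FinsetFamily

section Interlaced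

variable {α : Type*} [LinearOrder α] {s t : Finset α} {a b : α}

/-- `s = {a₁, …, aᵣ}` and `t = {b₁, …, bᵣ}` alternate as `a₁ < b₁ < a₂ < b₂ < ⋯ < aᵣ < bᵣ`.
This is encoded without enumerating the sets: each point of `s` has a point of `t` above it that
lies below all later points of `s`, and symmetrically for the points of `t`. -/
def Interlaced (s t : Finset α) : Prop :=
  (∀ x ∈ s, ∃ y ∈ t, x < y ∧ ∀ z ∈ s, x < z → y < z) ∧
    ∀ y ∈ t, ∃ x ∈ s, x < y ∧ ∀ z ∈ t, z < y → z < x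

/-- No two members of the family `𝒜` are interlaced. -/
def InterlaceFree (𝒜 : Finset (Finset α)) : Prop :=
  ∀ s ∈ 𝒜, ∀ t ∈ 𝒜, ¬ Interlaced s t

theorem interlaced_empty : Interlaced (∅ : Finset α) ∅ := by
  simp [Interlaced]

theorem Interlaced.insert_insert (h : Interlaced s t) (hs : ∀ x ∈ s, x < a)
    (ht : ∀ y ∈ t, y < a) (hab : a < b) : Interlaced (insert a s) (insert b t) := by
  grind [Interlaced]

theorem Interlaced.exists_gt (h : Interlaced s t) {x : α} (hx : x ∈ s) : ∃ y ∈ t, x < y :=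
  (h.1 x hx).imp fun _ hy => ⟨hy.1, hy.2.1⟩

theorem Interlaced.exists_lt (h : Interlaced s t) {y : α} (hy : y ∈ t) : ∃ x ∈ s, x < y :=
  (h.2 y hy).imp fun _ hx => ⟨hx.1, hx.2.1⟩

theorem Interlaced.raise_max (h : Interlaced s t) (ha : a ∈ t) (ht : ∀ y ∈ t, y ≤ a)
    (hab : a < b) : Interlaced s (insert b (t.erase a)) := by
  grind [Interlaced]

theorem Interlaced.disjoint (h : Interlaced s t) : Disjoint s t := by
  rw [disjoint_left]
  grind [Interlaced]

theorem Interlaced.exists_mem_right_between (h : Interlaced s t) (ha : a ∈ s) (hb : b ∈ s)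
    (hab : a < b) : ∃ c ∈ t, a < c ∧ c < b := by
  grind [Interlaced]

theorem Interlaced.exists_mem_left_between (h : Interlaced s t) (ha : a ∈ t) (hb : b ∈ t)
    (hab : a < b) : ∃ c ∈ s, a < c ∧ c < b := by
  grind [Interlaced]

theorem interlaced_triple {a₁ b₁ a₂ b₂ a₃ b₃ : α} (h₁ : a₁ < b₁) (h₂ : b₁ < a₂) (h₃ : a₂ < b₂)
    (h₄ : b₂ < a₃) (h₅ : a₃ < b₃) : Interlaced {a₁, a₂, a₃} {b₁, b₂, b₃} := by
  grind [Interlaced]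

theorem Interlaced.exists_eq_triple (h : Interlaced s t) (hs : #s = 3) (ht : #t = 3) :
    ∃ a₁ b₁ a₂ b₂ a₃ b₃, a₁ < b₁ ∧ b₁ < a₂ ∧ a₂ < b₂ ∧ b₂ < a₃ ∧ a₃ < b₃ ∧
      s = {a₁, a₂, a₃} ∧ t = {b₁, b₂, b₃} := by
  obtain ⟨a₁, a₂, a₃, ha₁₂, ha₂₃, rfl⟩ : ∃ a₁ a₂ a₃, a₁ < a₂ ∧ a₂ < a₃ ∧ s = {a₁, a₂, a₃} := by
    let f := s.orderEmbOfFin hs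
    have hf : s = univ.image f := by simp [f]
    refine ⟨f 0, f 1, f 2, by simp, by simp, ?_⟩
    rw [hf]
    simp [Fin.univ_succ]
  obtain ⟨b₁, hb₁, hab₁, hba₁⟩ := h.1 a₁ (by simp)
  obtain ⟨b₂, hb₂, hab₂, hba₂⟩ := h.1 a₂ (by simp)
  obtain ⟨b₃, hb₃, hab₃, -⟩ := h.1 a₃ (by simp)
  have hb₁₂ : b₁ < a₂ := hba₁ a₂ (by simp) ha₁₂
  have hb₂₃ : b₂ < a₃ := hba₂ a₃ (by simp) ha₂₃
  refine ⟨a₁, b₁, a₂, b₂, a₃, b₃, hab₁, hb₁₂, hab₂, hb₂₃, hab₃, rfl, ?_⟩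
  refine (eq_of_subset_of_card_le (by grind) ?_).symm
  grind

end Interlaced

section Count

variable {α : Type*} [DecidableEq α] {𝒜 : Finset (Finset α)} {s : Finset α} {a b : α} {r : ℕ}

theorem memberSubfamily_subset_powersetCard (h𝒜 : 𝒜 ⊆ powersetCard (r + 1) (insert a s)) :
    𝒜.memberSubfamily a ⊆ powersetCard r s := by
  intro e he
  obtain ⟨he𝒜, hae⟩ := mem_memberSubfamily.1 he
  obtain ⟨hsub, hcard⟩ := mem_powersetCard.1 (h𝒜 he𝒜)
  rw [card_insert_of_notMem hae] at hcard
  exact mem_powersetCard.2 ⟨(insert_subset_insert_iff hae).1 hsub, by lia⟩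

theorem nonMemberSubfamily_subset_powersetCard (h𝒜 : 𝒜 ⊆ powersetCard r (insert a s)) :
    𝒜.nonMemberSubfamily a ⊆ powersetCard r s := by
  intro e he
  obtain ⟨he𝒜, hae⟩ := mem_nonMemberSubfamily.1 he
  obtain ⟨hsub, hcard⟩ := mem_powersetCard.1 (h𝒜 he𝒜)
  exact mem_powersetCard.2 ⟨(subset_insert_iff_of_notMem hae).1 hsub, hcard⟩

theorem card_add_choose_le_card_nonMemberSubfamily (h𝒜 : 𝒜 ⊆ powersetCard r (insert a s))
    (ha : a ∉ s) : #𝒜 + (#s).choose r ≤ #(𝒜.nonMemberSubfamily a) + (#s + 1).choose r := by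
  have hinter : 𝒜 ∩ powersetCard r s ⊆ 𝒜.nonMemberSubfamily a := by
    grind [mem_nonMemberSubfamily]
  have hunion : 𝒜 ∪ powersetCard r s ⊆ powersetCard r (insert a s) :=
    union_subset h𝒜 (powersetCard_mono (subset_insert a s))
  have hu := card_le_card hunion
  have hi := card_le_card hinter
  have := card_union_add_card_inter 𝒜 (powersetCard r s)
  simp only [card_powersetCard, card_insert_of_notMem ha] at hu this
  lia

theorem compression_singleton_subset_powersetCard (h𝒜 : 𝒜 ⊆ powersetCard r s) (ha : a ∈ s) :
    𝓒 {a} {b} 𝒜 ⊆ powersetCard r s := by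
  intro e he
  have hsized : (𝒜 : Set (Finset α)).Sized r := fun e he => (mem_powersetCard.1 (h𝒜 he)).2
  refine mem_powersetCard.2 ⟨?_, hsized.uvCompression (by simp) he⟩
  by_cases he𝒜 : e ∈ 𝒜
  · exact (mem_powersetCard.1 (h𝒜 he𝒜)).1
  · have hswap := UV.sup_sdiff_mem_of_mem_compression_of_notMem he he𝒜
    grind

end Count

section Compression

variable {α : Type*} [LinearOrder α] {𝒜 : Finset (Finset α)} {a b : α}

theorem InterlaceFree.nonMemberSubfamily_compression (h𝒜 : InterlaceFree 𝒜) (hab : a < b)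
    (hle : ∀ s ∈ (𝓒 {a} {b} 𝒜).nonMemberSubfamily b, ∀ x ∈ s, x ≤ a) :
    InterlaceFree ((𝓒 {a} {b} 𝒜).nonMemberSubfamily b) := by
  have mem_or_swap_mem {s} (hs : s ∈ (𝓒 {a} {b} 𝒜).nonMemberSubfamily b) :
      s ∈ 𝒜 ∨ a ∈ s ∧ insert b (s.erase a) ∈ 𝒜 := by
    by_contra! hs'
    have hs𝒞 := (mem_nonMemberSubfamily.1 hs).1
    have has : a ∈ s := by simpa using UV.le_of_mem_compression_of_notMem hs𝒞 hs'.1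
    have := UV.sup_sdiff_mem_of_mem_compression_of_notMem hs𝒞 hs'.1
    have hswap : (s ⊔ {b}) \ {a} = insert b (s.erase a) := by grind
    exact hs'.2 has (hswap ▸ this)
  intro s hs t ht hst
  have hs𝒜 : s ∈ 𝒜 := by
    refine (mem_or_swap_mem hs).resolve_right fun ⟨has, _⟩ => ?_
    obtain ⟨y, hy, hay⟩ := hst.exists_gt has
    exact (hle t ht y hy).not_gt hay
  obtain ht𝒜 | ⟨hat, ht𝒜⟩ := mem_or_swap_mem ht
  · exact h𝒜 s hs𝒜 t ht𝒜 hst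
  · exact h𝒜 s hs𝒜 _ ht𝒜 (hst.raise_max hat (hle t ht) hab)

theorem InterlaceFree.nonMemberSubfamily_memberSubfamily_compression (h𝒜 : InterlaceFree 𝒜)
    (hab : a < b)
    (hlt : ∀ s ∈ ((𝓒 {a} {b} 𝒜).memberSubfamily b).nonMemberSubfamily a, ∀ x ∈ s, x < a) :
    InterlaceFree (((𝓒 {a} {b} 𝒜).memberSubfamily b).nonMemberSubfamily a) := by
  have insert_mem {s} (hs : s ∈ ((𝓒 {a} {b} 𝒜).memberSubfamily b).nonMemberSubfamily a) :
      insert a s ∈ 𝒜 ∧ insert b s ∈ 𝒜 := by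
    obtain ⟨⟨hs𝒞, hbs⟩, has⟩ := by
      simpa only [mem_nonMemberSubfamily, mem_memberSubfamily] using hs
    have hbs' : ({b} : Finset α) ≤ insert b s := by simp
    refine ⟨?_, UV.mem_of_mem_compression hs𝒞 hbs' (by simp)⟩
    have hswap : (insert b s ⊔ {a}) \ {b} = insert a s := by
      rw [sup_eq_union, union_comm, ← insert_eq, Finset.insert_comm, sdiff_singleton_eq_erase,
        erase_insert (by simp [hab.ne', hbs])]
    exact hswap ▸ UV.sup_sdiff_mem_of_mem_compression hs𝒞 hbs' (by simp [has, hab.ne])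
  intro s hs t ht hst
  exact h𝒜 _ (insert_mem hs).1 _ (insert_mem ht).2
    (hst.insert_insert (hlt s hs) (hlt t ht) hab)

theorem InterlaceFree.exists_card_add_choose_le {r : ℕ} {s : Finset α} (h𝒜 : InterlaceFree 𝒜)
    (hsub : 𝒜 ⊆ powersetCard (r + 1) (insert b (insert a s))) (hs : ∀ x ∈ s, x < a)
    (hab : a < b) :
    ∃ ℬ ⊆ powersetCard (r + 1) (insert a s), ∃ 𝒟 ⊆ powersetCard r s,
      InterlaceFree ℬ ∧ InterlaceFree 𝒟 ∧
        #𝒜 + (#s).choose r ≤ #ℬ + #𝒟 + (#s + 1).choose r := by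
  have hsub𝒞 : 𝓒 {a} {b} 𝒜 ⊆ powersetCard (r + 1) (insert b (insert a s)) :=
    compression_singleton_subset_powersetCard hsub (by simp)
  have hmem := memberSubfamily_subset_powersetCard hsub𝒞
  have hnon := nonMemberSubfamily_subset_powersetCard hsub𝒞
  have hmem_non := nonMemberSubfamily_subset_powersetCard hmem
  refine ⟨_, hnon, _, hmem_non, h𝒜.nonMemberSubfamily_compression hab (by grind),
    h𝒜.nonMemberSubfamily_memberSubfamily_compression hab (by grind), ?_⟩
  have hcard := card_memberSubfamily_add_card_nonMemberSubfamily b (𝓒 {a} {b} 𝒜)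
  have hcard_mem := card_add_choose_le_card_nonMemberSubfamily hmem fun ha => (hs a ha).false
  rw [UV.card_compression] at hcard
  lia

theorem InterlaceFree.eq_empty_of_subset_powersetCard_zero {s : Finset α} (h𝒜 : InterlaceFree 𝒜)
    (hsub : 𝒜 ⊆ powersetCard 0 s) : 𝒜 = ∅ := by
  rw [powersetCard_zero, subset_singleton_iff] at hsub
  refine hsub.resolve_right ?_
  rintro rfl
  exact h𝒜 ∅ (by simp) ∅ (by simp) interlaced_empty

end Compression

section Range

variable {𝒜 : Finset (Finset ℕ)}

theorem range_succ_add_succ (k r : ℕ) :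
    range (k + 1 + (r + 1)) = insert (k + r + 1) (insert (k + r) (range (k + r))) := by
  rw [← range_add_one, ← range_add_one, show k + 1 + (r + 1) = k + r + 1 + 1 by lia]

theorem InterlaceFree.card_add_choose_le (k r : ℕ) (h𝒜 : InterlaceFree 𝒜)
    (hsub : 𝒜 ⊆ powersetCard r (range (k + r))) : #𝒜 + k.choose r ≤ (k + r).choose r := by
  induction k generalizing r 𝒜 with
  | zero =>
    cases r with
    | zero => simp [h𝒜.eq_empty_of_subset_powersetCard_zero hsub]
    | succ r => simpa using card_le_card hsub
  | succ k ih =>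
    cases r with
    | zero => simp [h𝒜.eq_empty_of_subset_powersetCard_zero hsub]
    | succ r =>
      rw [range_succ_add_succ] at hsub
      obtain ⟨ℬ, hℬ, 𝒟, h𝒟, hℬfree, h𝒟free, hcard⟩ :=
        h𝒜.exists_card_add_choose_le hsub (by simp) (by simp)
      have hℬcard : #ℬ + k.choose (r + 1) ≤ (k + r + 1).choose (r + 1) :=
        ih (r + 1) hℬfree (by rwa [← add_assoc, range_add_one])
      have h𝒟card : #𝒟 + k.choose r ≤ (k + r).choose r := ih r h𝒟free h𝒟
      have hpascal := Nat.choose_succ_succ' (k + r + 1) r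
      rw [card_range] at hcard
      rw [Nat.choose_succ_succ', show k + 1 + (r + 1) = k + r + 1 + 1 by lia]
      lia

end Range

section Spread

variable {R : Type*} [AddMonoidWithOne R] {s t : Finset R}

/-- `s` contains neither `0` nor two consecutive elements. The `r`-sets that are not spread form the
extremal family. -/
def Spread (s : Finset R) : Prop :=
  0 ∉ s ∧ ∀ x ∈ s, x + 1 ∉ s

theorem Spread.subset (ht : Spread t) (hst : s ⊆ t) : Spread s :=
  ⟨fun h => ht.1 (hst h), fun x hx h => ht.2 x (hst hx) (hst h)⟩

instance [DecidableEq R] (s : Finset R) : Decidable (Spread s) :=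
  inferInstanceAs (Decidable (_ ∧ _))

theorem card_le_choose_of_forall_spread {𝒜 : Finset (Finset ℕ)} (k r : ℕ)
    (hsub : 𝒜 ⊆ powersetCard r (range (k + r))) (hspread : ∀ s ∈ 𝒜, Spread s) :
    #𝒜 ≤ k.choose r := by
  induction k generalizing r 𝒜 with
  | zero =>
    cases r with
    | zero => simpa using card_le_card hsub
    | succ r =>
      have hself := powersetCard_self (range (r + 1))
      rw [card_range] at hself
      rw [zero_add, hself] at hsub
      have hzero : range (r + 1) ∉ 𝒜 := fun h => (hspread _ h).1 (by simp)
      simp [(subset_singleton_iff.1 hsub).resolve_right (by rintro rfl; simp at hzero)]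
  | succ k ih =>
    cases r with
    | zero => simpa using card_le_card hsub
    | succ r =>
      rw [range_succ_add_succ] at hsub
      have hmem : 𝒜.memberSubfamily (k + r + 1) ⊆ powersetCard r (range (k + r)) := by
        intro s hs
        have hs𝒜 := hspread _ (mem_memberSubfamily.1 hs).1
        have hlast : k + r ∉ s := fun h => hs𝒜.2 (k + r) (by simp [h]) (by simp)
        have := memberSubfamily_subset_powersetCard hsub hs
        rw [mem_powersetCard] at this ⊢
        rwa [subset_insert_iff_of_notMem hlast] at this
      have hnon := nonMemberSubfamily_subset_powersetCard hsub
      rw [← range_add_one] at hnon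
      have hnon_le := ih (r + 1) hnon fun s hs => hspread s (mem_nonMemberSubfamily.1 hs).1
      have hmem_le := ih r hmem fun s hs =>
        (hspread _ (mem_memberSubfamily.1 hs).1).subset (subset_insert _ s)
      rw [← card_memberSubfamily_add_card_nonMemberSubfamily (k + r + 1) 𝒜, Nat.choose_succ_succ']
      lia

end Spread

section Circle

variable {n r : ℕ} {H : Finset (Finset (ZMod n))} {e f : Finset (ZMod n)} {x : ZMod n}

/-- The clockwise arc distances from `x` to the points of `e`. They describe `e` as a set of natural
numbers after the circle is cut open just before `x`. -/
def arcsFrom (x : ZMod n) (e : Finset (ZMod n)) : Finset ℕ :=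
  e.image fun y => (y - x).val

/-- Two members of `H` alternate around the circle, that is, they are interlaced after the circle is
cut open at a suitable point. On `r`-sets this is the configuration `M_r`. -/
def HasCrossing (H : Finset (Finset (ZMod n))) : Prop :=
  ∃ x : ZMod n, ∃ e ∈ H, ∃ f ∈ H, Interlaced (arcsFrom x e) (arcsFrom x f)

theorem val_sub_mem_arcsFrom (x : ZMod n) {y : ZMod n} (hy : y ∈ e) :
    (y - x).val ∈ arcsFrom x e :=
  mem_image_of_mem _ hy

theorem val_add_sub_add {j k : ℕ} (hjk : j ≤ k) (hk : k < n) :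
    ((x + k) - (x + j)).val = k - j := by
  rw [add_sub_add_left_eq_sub, ← Nat.cast_sub hjk, ZMod.val_cast_of_lt (by lia)]

theorem cwList_six_iff {a₁ b₁ a₂ b₂ a₃ b₃ : ZMod n} :
    CWList n [a₁, b₁, a₂, b₂, a₃, b₃] ↔
      0 < (b₁ - a₁).val ∧ (b₁ - a₁).val < (a₂ - a₁).val ∧ (a₂ - a₁).val < (b₂ - a₁).val ∧
        (b₂ - a₁).val < (a₃ - a₁).val ∧ (a₃ - a₁).val < (b₃ - a₁).val := by
  change List.IsChain (· < ·) [0, (b₁ - a₁).val, (a₂ - a₁).val, (b₂ - a₁).val, (a₃ - a₁).val,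
    (b₃ - a₁).val] ↔ _
  simp

variable [NeZero n]

theorem image_add_arcsFrom (x : ZMod n) (e : Finset (ZMod n)) :
    (arcsFrom x e).image (fun k : ℕ => x + (k : ZMod n)) = e := by
  simp [arcsFrom, image_image, Function.comp_def]

theorem arcsFrom_injective (x : ZMod n) : Function.Injective (arcsFrom x) :=
  Function.LeftInverse.injective (image_add_arcsFrom x)

theorem card_arcsFrom (x : ZMod n) (e : Finset (ZMod n)) : #(arcsFrom x e) = #e :=
  card_image_of_injective e ((ZMod.val_injective n).comp (sub_left_injective))

theorem lt_of_mem_arcsFrom {k : ℕ} (hk : k ∈ arcsFrom x e) : k < n := by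
  obtain ⟨y, -, rfl⟩ := mem_image.1 hk
  exact ZMod.val_lt _

theorem image_arcsFrom_subset_powersetCard (hH : ∀ e ∈ H, #e = r) (x : ZMod n) :
    H.image (arcsFrom x) ⊆ powersetCard r (range n) := by
  rw [image_subset_iff]
  intro e he
  exact mem_powersetCard.2
    ⟨fun k hk => mem_range.2 (lt_of_mem_arcsFrom hk), (card_arcsFrom x e).trans (hH e he)⟩

theorem card_add_choose_le_of_not_hasCrossing (hrn : r ≤ n) (hH : ∀ e ∈ H, #e = r)
    (hfree : ¬ HasCrossing H) : #H + (n - r).choose r ≤ n.choose r := by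
  have hsub := image_arcsFrom_subset_powersetCard hH 0
  have himage : InterlaceFree (H.image (arcsFrom 0)) := by
    simp only [InterlaceFree, mem_image]
    rintro _ ⟨e, he, rfl⟩ _ ⟨f, hf, rfl⟩ hef
    exact hfree ⟨0, e, he, f, hf, hef⟩
  have := himage.card_add_choose_le (n - r) r (by rwa [Nat.sub_add_cancel hrn])
  rwa [Nat.sub_add_cancel hrn, card_image_of_injective _ (arcsFrom_injective 0)] at this

theorem Spread.arcsFrom_zero (h : Spread e) : Spread (arcsFrom 0 e) := by
  simp only [Spread, arcsFrom, sub_zero, mem_image]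
  refine ⟨?_, ?_⟩
  · rintro ⟨y, hy, hy0⟩
    exact h.1 ((ZMod.val_eq_zero y).1 hy0 ▸ hy)
  · rintro _ ⟨y, hy, rfl⟩ ⟨z, hz, hzy⟩
    have : z = y + 1 := by simpa using congrArg (Nat.cast : ℕ → ZMod n) hzy
    exact h.2 y hy (this ▸ hz)

theorem val_add_one_eq_or (y : ZMod n) :
    (y + 1).val = y.val + 1 ∨ (y + 1).val = 0 ∧ y.val + 1 = n := by
  have hcast : y + 1 = ((y.val + 1 : ℕ) : ZMod n) := by simp
  obtain hlt | heq : y.val + 1 < n ∨ y.val + 1 = n := Nat.lt_or_eq_of_le y.val_lt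
  · exact .inl (by rw [hcast, ZMod.val_cast_of_lt hlt])
  · exact .inr ⟨by rw [hcast, heq]; simp, heq⟩

theorem add_one_notMem_left_of_interlaced (h : Interlaced (arcsFrom x e) (arcsFrom x f))
    {y : ZMod n} (hy : y ∈ e) : y + 1 ∉ e := by
  intro hy'
  have hmem := val_sub_mem_arcsFrom x hy
  have hmem' := val_sub_mem_arcsFrom x hy'
  rw [add_sub_right_comm] at hmem'
  obtain hsucc | ⟨-, hlast⟩ := val_add_one_eq_or (y - x)
  · obtain ⟨c, -, hc⟩ := h.exists_mem_right_between hmem hmem' (by lia)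
    lia
  · obtain ⟨c, hc, hlt⟩ := h.exists_gt hmem
    have := lt_of_mem_arcsFrom hc
    lia

theorem add_one_notMem_right_of_interlaced (h : Interlaced (arcsFrom x e) (arcsFrom x f))
    {y : ZMod n} (hy : y ∈ f) : y + 1 ∉ f := by
  intro hy'
  have hmem := val_sub_mem_arcsFrom x hy
  have hmem' := val_sub_mem_arcsFrom x hy'
  rw [add_sub_right_comm] at hmem'
  obtain hsucc | ⟨hzero, -⟩ := val_add_one_eq_or (y - x)
  · obtain ⟨c, -, hc⟩ := h.exists_mem_left_between hmem hmem' (by lia)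
    lia
  · obtain ⟨c, -, hlt⟩ := h.exists_lt hmem'
    lia

theorem spread_or_spread_of_interlaced (h : Interlaced (arcsFrom x e) (arcsFrom x f)) :
    Spread e ∨ Spread f := by
  by_cases h0 : 0 ∈ e
  · have hzero : (0 : ZMod n) ∉ f := fun h0' =>
      disjoint_left.1 h.disjoint (val_sub_mem_arcsFrom x h0) (val_sub_mem_arcsFrom x h0')
    exact .inr ⟨hzero, fun _ => add_one_notMem_right_of_interlaced h⟩
  · exact .inl ⟨h0, fun _ => add_one_notMem_left_of_interlaced h⟩

theorem choose_le_card_filter_not_spread (hrn : r ≤ n) :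
    n.choose r ≤ #{e ∈ powersetCard r (univ : Finset (ZMod n)) | ¬ Spread e} +
      (n - r).choose r := by
  set 𝒮 := {e ∈ powersetCard r (univ : Finset (ZMod n)) | Spread e}
  have hcard : ∀ e ∈ 𝒮, #e = r := fun e he => (mem_powersetCard.1 (mem_filter.1 he).1).2
  have hsub : 𝒮.image (arcsFrom 0) ⊆ powersetCard r (range (n - r + r)) := by
    rw [Nat.sub_add_cancel hrn]
    exact image_arcsFrom_subset_powersetCard hcard 0
  have hspread : ∀ s ∈ 𝒮.image (arcsFrom 0), Spread s := by
    simp only [mem_image]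
    rintro _ ⟨e, he, rfl⟩
    exact (mem_filter.1 he).2.arcsFrom_zero
  have hle := card_le_choose_of_forall_spread (n - r) r hsub hspread
  rw [card_image_of_injective _ (arcsFrom_injective 0)] at hle
  have hsplit :=
    card_filter_add_card_filter_not (s := powersetCard r (univ : Finset (ZMod n))) Spread
  rw [card_powersetCard, card_univ, ZMod.card] at hsplit
  lia

theorem ex_M3_general (n r : ℕ) [NeZero n] (hrn : r ≤ n) :
    IsGreatest {m : ℕ | ∃ H : Finset (Finset (ZMod n)),
        (∀ e ∈ H, #e = r) ∧ ¬ HasCrossing H ∧ #H = m}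
      (n.choose r - (n - r).choose r) := by
  refine ⟨?_, ?_⟩
  · set H := {e ∈ powersetCard r (univ : Finset (ZMod n)) | ¬ Spread e}
    have hH : ∀ e ∈ H, #e = r := fun e he => (mem_powersetCard.1 (mem_filter.1 he).1).2
    have hfree : ¬ HasCrossing H := by
      rintro ⟨x, e, he, f, hf, hef⟩
      exact (spread_or_spread_of_interlaced hef).elim (mem_filter.1 he).2 (mem_filter.1 hf).2
    refine ⟨H, hH, hfree, ?_⟩
    have hle := card_add_choose_le_of_not_hasCrossing hrn hH hfree
    have hge : n.choose r ≤ #H + (n - r).choose r := choose_le_card_filter_not_spread hrn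
    lia
  · rintro _ ⟨H, hH, hfree, rfl⟩
    exact Nat.le_sub_of_add_le (card_add_choose_le_of_not_hasCrossing hrn hH hfree)

theorem IsCgh.hasM3_iff (hH : IsCgh n H) : HasM3 n H ↔ HasCrossing H := by
  constructor
  · rintro ⟨a₁, a₂, a₃, b₁, b₂, b₃, hcw, ha, hb⟩
    obtain ⟨h₁, h₂, h₃, h₄, h₅⟩ := cwList_six_iff.1 hcw
    refine ⟨a₁, _, ha, _, hb, ?_⟩
    simpa [arcsFrom, image_insert] using interlaced_triple h₁ h₂ h₃ h₄ h₅
  · rintro ⟨x, e, he, f, hf, hef⟩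
    obtain ⟨a₁, b₁, a₂, b₂, a₃, b₃, h₁, h₂, h₃, h₄, h₅, hea, hfb⟩ := hef.exists_eq_triple
      ((card_arcsFrom x e).trans (hH e he)) ((card_arcsFrom x f).trans (hH f hf))
    have hb₃ : b₃ < n := lt_of_mem_arcsFrom (x := x) (e := f) (by simp [hfb])
    refine ⟨x + a₁, x + a₂, x + a₃, x + b₁, x + b₂, x + b₃, ?_, ?_, ?_⟩
    · rw [cwList_six_iff]
      repeat rw [val_add_sub_add (by lia) (by lia)]
      lia
    · rw [← image_add_arcsFrom x e, hea] at he
      simpa [image_insert] using he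
    · rw [← image_add_arcsFrom x f, hfb] at hf
      simpa [image_insert] using hf

end Circle

theorem ex_M3 (n : ℕ) (hn : 3 ≤ n) :
    IsGreatest {m : ℕ | ∃ H : Finset (Finset (ZMod n)),
        IsCgh n H ∧ ¬ HasM3 n H ∧ H.card = m}
      (n.choose 3 - (n - 3).choose 3) := by
  have : NeZero n := ⟨by lia⟩
  have hiff (H : Finset (Finset (ZMod n))) :
      IsCgh n H ∧ ¬ HasM3 n H ↔ (∀ e ∈ H, #e = 3) ∧ ¬ HasCrossing H :=
    and_congr_right fun hH => not_congr hH.hasM3_iff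
  simpa only [← and_assoc, hiff] using ex_M3_general n 3 hn
end

section
/- There exists a constant C > 0 such that for every integer n ≥ 3, every S_2-free cgh on Ω_n has at most (23/64)·n² + C·n triples; that is, ex_circ(n, S_2) ≤ 23n²/64 + O(n). -/
/-- `H` contains a copy of the configuration `S₂`: two triples sharing exactly
the vertex `v`, with the five vertices in clockwise cyclic order `v, b₁, a₁, a₂, b₂`. -/
def HasS2 (n : ℕ) (H : Finset (Finset (ZMod n))) : Prop :=
  ∃ v a₁ a₂ b₁ b₂ : ZMod n,
    CWList n [v, b₁, a₁, a₂, b₂] ∧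
    ({v, a₁, a₂} : Finset (ZMod n)) ∈ H ∧ ({v, b₁, b₂} : Finset (ZMod n)) ∈ H

/-!
Call an ordered pair `(a, b)` active if some triple `{a, b, z}` of `H` has its third vertex on the
arc from `b` to `a`. In an `S₂`-free `H`, clockwise points `a, b, c` whose three sides `(a, b)`,
`(b, c)`, `(c, a)` are all active span a triple of `H`. Counting the active sides of all
`3`-subsets of the `n` points therefore gives at most `2 * n.choose 3 + #H`.

On the other hand, each triple of `H` is, on at least two of its three sides `(a, b)`, the first one
whose third vertex is met when going clockwise from `b`, and the two arcs facing these sides cover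
all points but one. Each side has at most one first triple, so the same count is at least
`(n - 1) * #H`. Comparing the two bounds gives `3 * #H ≤ n * (n - 1)`, which improves the
constant `23 / 64` to `1 / 3`.
-/

section CircularOrder

variable {α : Type*} [CircularOrder α] {a b c d : α}

lemma sbtw_or_sbtw (hab : a ≠ b) (hbc : b ≠ c) (hca : c ≠ a) : sbtw a b c ∨ sbtw c b a := by
  rw [sbtw_iff_not_btw, sbtw_iff_not_btw, ← not_and_or]
  rintro ⟨h, h'⟩
  rcases h'.antisymm h with rfl | rfl | rfl <;> contradiction

lemma ne_of_sbtw (h : sbtw a b c) : a ≠ b ∧ b ≠ c ∧ c ≠ a := by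
  refine ⟨?_, ?_, ?_⟩ <;> rintro rfl
  exacts [sbtw_irrefl_left h, sbtw_irrefl_right h, sbtw_irrefl_left_right h]

lemma sbtw_right_of_sbtw (hbc : sbtw a b c) (hcd : sbtw a c d) : sbtw b c d :=
  (hcd.cyclic_left.trans_right hbc.cyclic_right).cyclic_right

lemma sbtw_left_of_sbtw (h : sbtw a b c) (hd : sbtw b d c) : sbtw a b d :=
  (hd.trans_right h.cyclic_left).cyclic_right

lemma sbtw_or_sbtw_of_sbtw (hc : sbtw a b c) (hd : sbtw a b d) (hdc : d ≠ c) :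
    sbtw b d c ∨ sbtw c d a := by
  rcases sbtw_or_sbtw (ne_of_sbtw hd).2.2.symm hdc (ne_of_sbtw hc).2.2 with h | h
  · exact .inl (sbtw_right_of_sbtw hd h)
  · exact .inr h

end CircularOrder

section Triples

open Finset

lemma triple_rotate {α : Type*} [DecidableEq α] (a b c : α) :
    ({a, b, c} : Finset α) = {b, c, a} := by
  rw [insert_comm a b, pair_comm a c]

lemma exists_sbtw_of_card_eq_three {α : Type*} [CircularOrder α] [DecidableEq α] {e : Finset α}
    (he : #e = 3) : ∃ a b c, sbtw a b c ∧ e = {a, b, c} := by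
  obtain ⟨a, b, c, hab, hac, hbc, rfl⟩ := card_eq_three.1 he
  rcases sbtw_or_sbtw hab hbc hac.symm with h | h
  · exact ⟨a, b, c, h, rfl⟩
  · exact ⟨c, b, a, h, by rw [triple_rotate, insert_comm]⟩

end Triples

section ZMod

variable {n : ℕ} [NeZero n]

lemma val_sub_cases (a b : ZMod n) :
    b.val ≤ a.val ∧ (a - b).val = a.val - b.val ∨
      a.val < b.val ∧ (a - b).val = n + a.val - b.val := by
  rcases le_or_gt b.val a.val with h | h
  · exact .inl ⟨h, ZMod.val_sub h⟩
  · have hne : b - a ≠ 0 := sub_ne_zero.2 fun hba => h.ne (congrArg ZMod.val hba.symm)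
    have : NeZero (b - a) := ⟨hne⟩
    have hb := ZMod.val_lt b
    rw [← neg_sub b a, ZMod.val_neg_of_ne_zero, ZMod.val_sub h.le]
    omega

lemma sbtw_iff_val {a b c : ZMod n} :
    sbtw a b c ↔ a.val < b.val ∧ b.val < c.val ∨ b.val < c.val ∧ c.val < a.val ∨
      c.val < a.val ∧ a.val < b.val := by
  obtain ⟨m, rfl⟩ := Nat.exists_eq_succ_of_ne_zero (NeZero.ne n)
  exact Fin.sbtw_iff

lemma sbtw_iff_val_sub {v a b : ZMod n} :
    sbtw v a b ↔ 0 < (a - v).val ∧ (a - v).val < (b - v).val := by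
  have := val_sub_cases a v
  have := val_sub_cases b v
  have := ZMod.val_lt a
  have := ZMod.val_lt b
  have := ZMod.val_lt v
  rw [sbtw_iff_val]
  omega

end ZMod

lemma six_mul_choose_three_s10 (n : ℕ) : 6 * n.choose 3 = (n - 2) * (n * (n - 1)) := by
  have h : n.descFactorial 3 = 6 * n.choose 3 := Nat.descFactorial_eq_factorial_mul_choose n 3
  rw [← h]
  simp only [Nat.descFactorial_succ, Nat.descFactorial_zero, Nat.sub_zero, mul_one]
  ring

/-- `S₂`-freeness over an arbitrary circular order: the hypotheses `sbtw v b₁ a₁`, `sbtw v a₁ a₂`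
and `sbtw v a₂ b₂` together say that the points occur in the cyclic order `v, b₁, a₁, a₂, b₂`. -/
def S2Free {α : Type*} [CircularOrder α] [DecidableEq α] (H : Finset (Finset α)) : Prop :=
  ∀ ⦃v a₁ a₂ b₁ b₂ : α⦄, sbtw v b₁ a₁ → sbtw v a₁ a₂ → sbtw v a₂ b₂ →
    {v, a₁, a₂} ∈ H → {v, b₁, b₂} ∉ H

namespace S2Free

open Finset

section Structure

variable {α : Type*} [CircularOrder α] [DecidableEq α] {H : Finset (Finset α)} {a b c : α}

/-- The ordered pair `(a, b)` is active if it is a side of a triple of `H` whose third vertex lies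
on the arc from `b` to `a`. -/
def IsActive (H : Finset (Finset α)) (a b : α) : Prop :=
  ∃ z, sbtw a b z ∧ {a, b, z} ∈ H

/-- The arc from `b` to `c` is clear for the ordered pair `(a, b)` if it contains no third vertex
of a triple of `H` with side `(a, b)`. For `{a, b, c} ∈ H` this says that `{a, b, c}` is the first
triple on this side. -/
def IsClear (H : Finset (Finset α)) (a b c : α) : Prop :=
  ∀ z, sbtw b z c → {a, b, z} ∉ H

lemma isClear_or_isClear (hS : S2Free H) (h : sbtw a b c) :
    IsClear H a b c ∨ IsClear H c a b := by
  by_contra! hcon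
  simp only [IsClear, not_forall, not_not] at hcon
  obtain ⟨⟨z, hz, habz⟩, y, hy, hcay⟩ := hcon
  -- The points occur in the order `a, y, b, z, c`, so `{a, b, z}` and `{a, y, c}` form an `S₂`.
  rw [triple_rotate] at hcay
  exact hS hy (sbtw_left_of_sbtw h hz) (h.trans_left hz) habz hcay

lemma eq_of_isClear {d : α} (hc : sbtw a b c) (habc : {a, b, c} ∈ H) (hc' : IsClear H a b c)
    (hd : sbtw a b d) (habd : {a, b, d} ∈ H) (hd' : IsClear H a b d) : c = d := by
  by_contra hne
  rcases sbtw_or_sbtw_of_sbtw hc hd (Ne.symm hne) with h | h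
  · exact hc' d h habd
  · exact hd' c (sbtw_right_of_sbtw hc h.cyclic_right) habc

lemma mem_of_isActive_of_isClear (hS : S2Free H) (h : sbtw a b c)
    (hab : IsActive H a b) (hab' : IsClear H a b c)
    (hbc : IsActive H b c) (hbc' : IsClear H b c a) : {a, b, c} ∈ H := by
  obtain ⟨z, hz, habz⟩ := hab
  obtain ⟨y, hy, hbcy⟩ := hbc
  -- Unless `z = c` or `y = a`, clearness forces the order `b, c, z, a, y`, and then `{b, z, a}`
  -- and `{b, c, y}` form an `S₂`.
  by_contra hnot
  have hzc : z ≠ c := by rintro rfl; exact hnot habz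
  have hya : y ≠ a := by rintro rfl; rw [triple_rotate] at hnot; exact hnot hbcy
  have hz' : sbtw c z a := (sbtw_or_sbtw_of_sbtw h hz hzc).resolve_left fun h' => hab' z h' habz
  have hy' : sbtw a y b :=
    (sbtw_or_sbtw_of_sbtw h.cyclic_left hy hya).resolve_left fun h' => hbc' y h' hbcy
  rw [triple_rotate] at habz
  exact hS (sbtw_left_of_sbtw h.cyclic_left hz') hz.cyclic_left hy'.cyclic_right habz hbcy

lemma mem_of_isActive (hS : S2Free H) (h : sbtw a b c) (hab : IsActive H a b)
    (hbc : IsActive H b c) (hca : IsActive H c a) : {a, b, c} ∈ H := by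
  have of_ab_bc := hS.mem_of_isActive_of_isClear h hab
  have of_bc_ca := hS.mem_of_isActive_of_isClear h.cyclic_left hbc
  have of_ca_ab := hS.mem_of_isActive_of_isClear h.cyclic_right hca
  rw [← triple_rotate] at of_bc_ca
  rw [triple_rotate] at of_ca_ab
  have := hS.isClear_or_isClear h
  have := hS.isClear_or_isClear h.cyclic_left
  have := hS.isClear_or_isClear h.cyclic_right
  tauto

end Structure

section Orientations

variable {α : Type*} [CircularOrder α] [Fintype α] {a b c : α}

/-- The open arc from `b` to `a`, that is, the arc facing the ordered pair `(a, b)`. -/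
noncomputable def arc (a b : α) : Finset α :=
  open Classical in {v | sbtw a b v}

lemma mem_arc {v : α} : v ∈ arc a b ↔ sbtw a b v := by simp [arc]

lemma card_le_card_arc_add_card_arc (h : sbtw a b c) :
    Fintype.card α ≤ #(arc a b) + #(arc b c) + 1 := by
  classical
  have hcover : (univ : Finset α) ⊆ insert b (arc a b ∪ arc b c) := by
    intro v _
    simp only [mem_insert, mem_union, mem_arc]
    by_cases hvb : v = b
    · exact .inl hvb
    by_cases hva : v = a
    · exact .inr (.inr (hva ▸ h.cyclic_left))
    rcases sbtw_or_sbtw (ne_of_sbtw h).1 (Ne.symm hvb) hva with hv | hv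
    · exact .inr (.inl hv)
    · exact .inr (.inr (h.cyclic_left.trans_right hv.cyclic_left))
  calc Fintype.card α ≤ #(insert b (arc a b ∪ arc b c)) := card_le_card hcover
    _ ≤ #(arc a b ∪ arc b c) + 1 := card_insert_le _ _
    _ ≤ #(arc a b) + #(arc b c) + 1 := by gcongr; exact card_union_le _ _

/-- The cyclic shift `(a, b, c) ↦ (b, c, a)`. -/
def rotate (α : Type*) : α × α × α ≃ α × α × α :=
  (Equiv.prodComm α (α × α)).trans (Equiv.prodAssoc α α α)

lemma rotate_apply {α : Type*} (a b c : α) : rotate α (a, b, c) = (b, c, a) := rfl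

variable [DecidableEq α] {H : Finset (Finset α)}

/-- The clockwise orderings of the triples of `H`. Each triple has three of them. -/
noncomputable def orientations (H : Finset (Finset α)) : Finset (α × α × α) :=
  open Classical in {t | sbtw t.1 t.2.1 t.2.2 ∧ {t.1, t.2.1, t.2.2} ∈ H}

lemma mem_orientations : (a, b, c) ∈ orientations H ↔ sbtw a b c ∧ {a, b, c} ∈ H := by
  simp [orientations]

lemma mem_orientations_powersetCard : (a, b, c) ∈ orientations (powersetCard 3 univ) ↔
    sbtw a b c := by
  simp only [mem_orientations, mem_powersetCard, subset_univ, true_and, and_iff_left_iff_imp]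
  intro h
  obtain ⟨hab, hbc, hca⟩ := ne_of_sbtw h
  exact card_eq_three.2 ⟨a, b, c, hab, hca.symm, hbc, rfl⟩

lemma rotate_mem_orientations (t : α × α × α) :
    t ∈ orientations H ↔ rotate α t ∈ orientations H := by
  obtain ⟨a, b, c⟩ := t
  rw [rotate_apply, mem_orientations, mem_orientations, triple_rotate a, ← sbtw_cyclic]

lemma three_mul_sum_orientations (f : α × α × α → ℕ) :
    3 * ∑ t ∈ orientations H, f t =
      ∑ t ∈ orientations H, (f t + f (rotate α t) + f (rotate α (rotate α t))) := by
  have hrotate (g : α × α × α → ℕ) :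
      ∑ t ∈ orientations H, g (rotate α t) = ∑ t ∈ orientations H, g t :=
    sum_equiv (rotate α) rotate_mem_orientations fun _ _ => rfl
  rw [sum_add_distrib, sum_add_distrib, hrotate fun t => f (rotate α t), hrotate]
  ring

lemma filter_orientations_eq (h : sbtw a b c) (habc : {a, b, c} ∈ H) :
    {t ∈ orientations H | {t.1, t.2.1, t.2.2} = ({a, b, c} : Finset α)} =
      {(a, b, c), (b, c, a), (c, a, b)} := by
  ext ⟨x, y, z⟩
  simp only [mem_filter, mem_orientations, mem_insert, mem_singleton, Prod.mk.injEq]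
  constructor
  · rintro ⟨⟨hxyz, -⟩, heq⟩
    have hx : x ∈ ({a, b, c} : Finset α) := by simp [← heq]
    have hy : y ∈ ({a, b, c} : Finset α) := by simp [← heq]
    have hz : z ∈ ({a, b, c} : Finset α) := by simp [← heq]
    have := ne_of_sbtw hxyz
    have := sbtw_asymm h
    have := sbtw_asymm h.cyclic_left
    have := sbtw_asymm h.cyclic_right
    simp only [mem_insert, mem_singleton] at hx hy hz
    grind
  · rintro (⟨rfl, rfl, rfl⟩ | ⟨rfl, rfl, rfl⟩ | ⟨rfl, rfl, rfl⟩)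
    · exact ⟨⟨h, habc⟩, rfl⟩
    · exact ⟨⟨h.cyclic_left, triple_rotate z x y ▸ habc⟩, (triple_rotate z x y).symm⟩
    · exact ⟨⟨h.cyclic_right, triple_rotate x y z ▸ habc⟩, triple_rotate x y z⟩

lemma card_orientations (hH : ∀ e ∈ H, #e = 3) : #(orientations H) = 3 * #H := by
  have hmaps : ∀ t ∈ orientations H, {t.1, t.2.1, t.2.2} ∈ H :=
    fun _ ht => (mem_orientations.1 ht).2
  rw [card_eq_sum_card_fiberwise hmaps, mul_comm]
  refine sum_const_nat fun e he => ?_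
  obtain ⟨a, b, c, h, rfl⟩ := exists_sbtw_of_card_eq_three (hH e he)
  obtain ⟨hab, hbc, hca⟩ := ne_of_sbtw h
  rw [filter_orientations_eq h he]
  exact card_eq_three.2 ⟨_, _, _, by simp [hab], by simp [hca.symm], by simp [hbc], rfl⟩

end Orientations

section Counting

variable {α : Type*} [CircularOrder α] [Fintype α] [DecidableEq α] {H : Finset (Finset α)}

/-- The size of the arc facing the side `(a, b)` of `t = (a, b, c)` if `c` is the first third
vertex on this side, and `0` otherwise. -/
noncomputable def clearWeight (H : Finset (Finset α)) (t : α × α × α) : ℕ :=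
  open Classical in if IsClear H t.1 t.2.1 t.2.2 then #(arc t.1 t.2.1) else 0

/-- The clockwise triples of points, in `H` or not, whose side formed by the first two points
is active. -/
noncomputable def activeTriples (H : Finset (Finset α)) : Finset (α × α × α) :=
  open Classical in {t ∈ orientations (powersetCard 3 univ) | IsActive H t.1 t.2.1}

lemma card_le_sum_clearWeight (hS : S2Free H) {a b c : α} (h : sbtw a b c) :
    Fintype.card α ≤
      clearWeight H (a, b, c) + clearWeight H (b, c, a) + clearWeight H (c, a, b) + 1 := by
  have := hS.isClear_or_isClear h
  have := hS.isClear_or_isClear h.cyclic_left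
  have := hS.isClear_or_isClear h.cyclic_right
  have := card_le_card_arc_add_card_arc h
  have := card_le_card_arc_add_card_arc h.cyclic_left
  have := card_le_card_arc_add_card_arc h.cyclic_right
  grind [clearWeight]

lemma card_mul_card_orientations_le (hS : S2Free H) :
    Fintype.card α * #(orientations H) ≤
      3 * ∑ t ∈ orientations H, clearWeight H t + #(orientations H) := by
  rw [three_mul_sum_orientations, card_eq_sum_ones, mul_sum, ← sum_add_distrib]
  refine sum_le_sum ?_
  rintro ⟨a, b, c⟩ ht
  simpa only [mul_one, rotate_apply] using hS.card_le_sum_clearWeight (mem_orientations.1 ht).1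

lemma sum_clearWeight_le_card_activeTriples :
    ∑ t ∈ orientations H, clearWeight H t ≤ #(activeTriples H) := by
  classical
  simp only [clearWeight]
  rw [← sum_filter, ← card_sigma]
  -- A point `v` on the arc facing a side `(a, b)` with a first triple is recorded as `(a, b, v)`.
  refine card_le_card_of_injOn (fun s => (s.1.1, s.1.2.1, s.2)) ?_ ?_
  · rintro ⟨⟨a, b, c⟩, v⟩ hs
    simp only [coe_sigma, Set.mem_sigma_iff, mem_coe, mem_filter, mem_orientations, mem_arc] at hs
    obtain ⟨⟨⟨h, habc⟩, -⟩, hv⟩ := hs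
    simpa [activeTriples, mem_orientations_powersetCard, hv] using ⟨c, h, habc⟩
  · rintro ⟨⟨a, b, c⟩, v⟩ hs ⟨⟨a', b', c'⟩, v'⟩ hs' heq
    simp only [Prod.mk.injEq] at heq
    obtain ⟨rfl, rfl, rfl⟩ := heq
    simp only [coe_sigma, Set.mem_sigma_iff, mem_coe, mem_filter, mem_orientations] at hs hs'
    obtain ⟨⟨⟨hc, habc⟩, hclear⟩, -⟩ := hs
    obtain ⟨⟨⟨hc', habc'⟩, hclear'⟩, -⟩ := hs'
    obtain rfl := eq_of_isClear hc habc hclear hc' habc' hclear'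
    rfl

lemma three_mul_card_activeTriples_le (hS : S2Free H) :
    3 * #(activeTriples H) ≤
      2 * #(orientations (powersetCard 3 (univ : Finset α))) + #(orientations H) := by
  classical
  have horient : orientations H =
      {t ∈ orientations (powersetCard 3 (univ : Finset α)) | {t.1, t.2.1, t.2.2} ∈ H} := by
    ext ⟨a, b, c⟩
    rw [mem_filter, mem_orientations_powersetCard, mem_orientations]
  rw [activeTriples, card_filter, three_mul_sum_orientations, horient, card_filter,
    card_eq_sum_ones, mul_sum, ← sum_add_distrib]
  refine sum_le_sum ?_
  rintro ⟨a, b, c⟩ ht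
  have := hS.mem_of_isActive (mem_orientations_powersetCard.1 ht)
  grind [rotate_apply]

lemma card_mul_card_le (hS : S2Free H) (hH : ∀ e ∈ H, #e = 3) :
    Fintype.card α * #H ≤ 2 * (Fintype.card α).choose 3 + 2 * #H := by
  have hall : #(orientations (powersetCard 3 (univ : Finset α))) =
      3 * (Fintype.card α).choose 3 := by
    rw [card_orientations fun e he => (mem_powersetCard.1 he).2, card_powersetCard, card_univ]
  have hcount : Fintype.card α * (3 * #H) ≤ 3 * (2 * (Fintype.card α).choose 3 + 2 * #H) :=
    calc Fintype.card α * (3 * #H)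
      _ ≤ 3 * ∑ t ∈ orientations H, clearWeight H t + 3 * #H := by
        simpa only [card_orientations hH] using hS.card_mul_card_orientations_le
      _ ≤ 3 * #(activeTriples H) + 3 * #H := by
        gcongr; exact sum_clearWeight_le_card_activeTriples
      _ ≤ 2 * (3 * (Fintype.card α).choose 3) + 3 * #H + 3 * #H := by
        gcongr; simpa only [card_orientations hH, hall] using hS.three_mul_card_activeTriples_le
      _ = 3 * (2 * (Fintype.card α).choose 3 + 2 * #H) := by ring
  linarith

end Counting

end S2Free

lemma s2Free_of_not_hasS2 {n : ℕ} [NeZero n] {H : Finset (Finset (ZMod n))} (hS : ¬ HasS2 n H) :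
    S2Free H := by
  intro v a₁ a₂ b₁ b₂ hba haa hab ha hb
  rw [sbtw_iff_val_sub] at hba haa hab
  refine hS ⟨v, a₁, a₂, b₁, b₂, ?_, ha, hb⟩
  change List.IsChain (· < ·) [0, (b₁ - v).val, (a₁ - v).val, (a₂ - v).val, (b₂ - v).val]
  simp [hba, haa, hab]

theorem ex_S2_upper_general {α : Type*} [CircularOrder α] [Fintype α] [DecidableEq α]
    {H : Finset (Finset α)} (hH : ∀ e ∈ H, e.card = 3) (hS : S2Free H) :
    3 * H.card ≤ Fintype.card α * (Fintype.card α - 1) := by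
  rcases lt_or_ge (Fintype.card α) 3 with hcard | hcard
  · have hempty : H = ∅ := Finset.eq_empty_of_forall_notMem fun e he => by
      have := Finset.card_le_univ e
      have := hH e he
      omega
    simp [hempty]
  · refine Nat.le_of_mul_le_mul_left ?_ (Nat.sub_pos_of_lt hcard)
    rw [← six_mul_choose_three_s10]
    have hcount := hS.card_mul_card_le hH
    obtain ⟨m, hm⟩ := Nat.exists_eq_add_of_le' hcard
    rw [hm] at hcount ⊢
    rw [show m + 3 - 2 = m + 1 from rfl]
    linarith

theorem ex_S2_upper :
    ∃ C : ℝ, 0 < C ∧ ∀ n : ℕ, 3 ≤ n →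
      ∀ H : Finset (Finset (ZMod n)), IsCgh n H → ¬ HasS2 n H →
        (H.card : ℝ) ≤ 23 / 64 * n ^ 2 + C * n := by
  refine ⟨1, one_pos, fun n hn H hH hS => ?_⟩
  have : NeZero n := ⟨by omega⟩
  have h := ex_S2_upper_general hH (s2Free_of_not_hasS2 hS)
  rw [ZMod.card] at h
  have h' : 3 * (H.card : ℝ) ≤ n * n := by exact_mod_cast h.trans (by gcongr; exact n.sub_le 1)
  nlinarith
end
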